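/- Let G be a connected simple graph on n ≥ 2 vertices such that every block of G either has maximum degree at most 3 or is claw-free. Then G has a spanning closed walk of length at most (4/3) · OLP(G). In particular, the integrality gap of the Held-Karp relaxation on this class of graphs is at most 4/3. -/

import Mathlib

open SimpleGraph

/-- The value `Σ_{e ∈ E} x e` of an assignment `x` on the edges of `G`. -/
noncomputable def hkValue {V : Type*} (G : SimpleGraph V) (x : Sym2 V → ℝ) : ℝ :=
  ∑ᶠ e ∈ G.edgeSet, x e

/-- The total weight `Σ_{e ∈ δ(S)} x e` of the edges of `G` crossing the cut `(S, Sᶜ)`. -/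
noncomputable def hkCut {V : Type*} (G : SimpleGraph V) (x : Sym2 V → ℝ)
    (S : Set V) : ℝ :=
  ∑ᶠ e ∈ {e ∈ G.edgeSet | ∃ a b, e = s(a, b) ∧ a ∈ S ∧ b ∉ S}, x e

/-- Feasibility for the Held-Karp relaxation of graph-TSP on `G`. -/
def HKFeasible {V : Type*} (G : SimpleGraph V) (x : Sym2 V → ℝ) : Prop :=
  (∀ e, 0 ≤ x e) ∧
  ∀ S : Set V, S.Nonempty → S ≠ Set.univ → 2 ≤ hkCut G x S

/-- The optimum value `OLP(G)` of the Held-Karp relaxation of graph-TSP on `G`. -/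
noncomputable def OLP {V : Type*} [Fintype V] (G : SimpleGraph V) : ℝ :=
  sInf {y | ∃ x, HKFeasible G x ∧ y = hkValue G x}

/-- A block of a graph `G`: a maximal vertex set inducing a connected subgraph
without a cut vertex. -/
def IsBlock {V : Type*} (G : SimpleGraph V) (B : Set V) : Prop :=
  (G.induce B).Connected ∧
  (∀ v ∈ B, (G.induce (B \ {v})).Preconnected) ∧
  ∀ B' : Set V, B ⊆ B' → (G.induce B').Connected →
    (∀ v ∈ B', (G.induce (B' \ {v})).Preconnected) → B' = B

open SimpleGraph
set_option linter.unusedSectionVars false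
set_option linter.unusedSimpArgs false
set_option linter.unusedVariables false

/-! ### Part 1: T-joins in finite multigraphs -/
universe u
section TJoins
variable {V E : Type*} [DecidableEq V] [DecidableEq E]

/-- The mod-2 boundary of an edge set in the multigraph with end maps `s`, `t`. -/
def mbd (s t : E → V) (F : Finset E) : V → ZMod 2 :=
  ∑ e ∈ F, (Pi.single (s e) 1 + Pi.single (t e) 1)

theorem sum_symmDiff_two {A : Type*} [AddCommGroup A] (hA : ∀ x : A, x + x = 0) (f : E → A)
    (F G : Finset E) : ∑ e ∈ symmDiff F G, f e = ∑ e ∈ F, f e + ∑ e ∈ G, f e := by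
  have h1 : ∑ e ∈ symmDiff F G, f e = ∑ e ∈ F \ G, f e + ∑ e ∈ G \ F, f e := by
    rw [← Finset.sum_union disjoint_sdiff_sdiff]; rfl
  have h2 : ∑ e ∈ F, f e = ∑ e ∈ F \ G, f e + ∑ e ∈ F ∩ G, f e := by
    rw [add_comm, Finset.sum_inter_add_sum_sdiff]
  have h3 : ∑ e ∈ G, f e = ∑ e ∈ G \ F, f e + ∑ e ∈ F ∩ G, f e := by
    rw [add_comm, Finset.inter_comm, Finset.sum_inter_add_sum_sdiff]
  rw [h1, h2, h3]
  have := hA (∑ e ∈ F ∩ G, f e)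
  calc _ = ∑ e ∈ F \ G, f e + ∑ e ∈ G \ F, f e + 0 := by rw [add_zero]
    _ = _ := by rw [← this]; abel

theorem fun_two_add_self (x : V → ZMod 2) : x + x = 0 := by
  funext v; exact CharTwo.add_self_eq_zero (x v)

theorem mbd_symmDiff (s t : E → V) (F G : Finset E) :
    mbd s t (symmDiff F G) = mbd s t F + mbd s t G :=
  sum_symmDiff_two fun_two_add_self _ F G

theorem mbd_empty (s t : E → V) : mbd s t ∅ = 0 := by simp [mbd]

theorem mbd_singleton (s t : E → V) (e : E) :
    mbd s t {e} = Pi.single (s e) 1 + Pi.single (t e) 1 := by simp [mbd]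

theorem mbd_erase (s t : E → V) (F : Finset E) (e : E) (he : e ∈ F) :
    mbd s t (F.erase e) = mbd s t F + (Pi.single (s e) 1 + Pi.single (t e) 1) := by
  have : F.erase e = symmDiff F {e} := by
    ext x; simp only [Finset.mem_erase, Finset.mem_symmDiff, Finset.mem_singleton]
    constructor
    · rintro ⟨h1, h2⟩; exact Or.inl ⟨h2, h1⟩
    · rintro (⟨h1, h2⟩ | ⟨h1, h2⟩)
      · exact ⟨h2, h1⟩
      · subst h1; exact absurd he h2
  rw [this, mbd_symmDiff, mbd_singleton]

/-- No edge of `F` crosses `Y`: the boundary sums to zero on `Y`. -/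
theorem sum_mbd_closed (s t : E → V) (F : Finset E) (Y : Finset V)
    (h : ∀ e ∈ F, (s e ∈ Y ↔ t e ∈ Y)) : ∑ v ∈ Y, mbd s t F v = 0 := by
  unfold mbd
  simp only [Finset.sum_apply, Pi.add_apply]
  rw [Finset.sum_comm]
  apply Finset.sum_eq_zero
  intro e he
  rw [Finset.sum_add_distrib]
  simp only [Pi.single_apply, Finset.sum_ite_eq', Finset.sum_ite_eq]
  have := h e he
  by_cases h1 : s e ∈ Y
  · have h2 := this.1 h1
    simp only [h1, h2, if_true]; decide
  · have h2 : t e ∉ Y := fun hh => h1 (this.2 hh)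
    simp [h1, h2]

theorem mbd_reach [Fintype V] (s t : E → V) (D : Finset E) (x y : V) :
    (∃ P ⊆ D, mbd s t P = Pi.single x 1 + Pi.single y 1) ∨
    ∃ Y : Finset V, x ∈ Y ∧ y ∉ Y ∧ ∀ e ∈ D, (s e ∈ Y ↔ t e ∈ Y) := by
  classical
  by_cases hy : ∃ P ⊆ D, mbd s t P = Pi.single x 1 + Pi.single y 1
  · exact Or.inl hy
  right
  have key : ∀ e ∈ D, ∀ p q : V,
      (Pi.single (s e) 1 + Pi.single (t e) 1 : V → ZMod 2) = Pi.single p 1 + Pi.single q 1 →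
      (∃ P ⊆ D, mbd s t P = Pi.single x 1 + Pi.single p 1) →
      (∃ P ⊆ D, mbd s t P = Pi.single x 1 + Pi.single q 1) := by
    rintro e he p q hpq ⟨P, hP, hb⟩
    refine ⟨symmDiff P {e}, ?_, ?_⟩
    · intro a ha
      rcases Finset.mem_symmDiff.1 ha with h | h
      · exact hP h.1
      · rw [Finset.mem_singleton.1 h.1]; exact he
    · rw [mbd_symmDiff, mbd_singleton, hb, hpq]
      have := fun_two_add_self (Pi.single p 1 : V → ZMod 2)
      calc _ = Pi.single x 1 + (Pi.single p 1 + Pi.single p 1) + Pi.single q 1 := by abel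
        _ = _ := by rw [this, add_zero]
  refine ⟨Finset.univ.filter fun v => ∃ P ⊆ D, mbd s t P = Pi.single x 1 + Pi.single v 1,
    ?_, ?_, ?_⟩
  · simp only [Finset.mem_filter, Finset.mem_univ, true_and]
    exact ⟨∅, Finset.empty_subset _, by rw [mbd_empty, fun_two_add_self]⟩
  · simpa using hy
  · intro e he
    simp only [Finset.mem_filter, Finset.mem_univ, true_and]
    exact ⟨key e he _ _ rfl, key e he _ _ (add_comm _ _)⟩

/-- `e` is a non-loop edge at `a`. -/
def minc (s t : E → V) (a : V) (e : E) : Prop := s e ≠ t e ∧ (s e = a ∨ t e = a)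

theorem minc_other (s t : E → V) (a : V) (e : E) (h : minc s t a e) :
    ∃ z, z ≠ a ∧ (Pi.single (s e) 1 + Pi.single (t e) 1 : V → ZMod 2)
        = Pi.single a 1 + Pi.single z 1 ∧
      ∀ Y : Finset V, (s e ∈ Y ↔ t e ∈ Y) ↔ (a ∈ Y ↔ z ∈ Y) := by
  obtain ⟨h1, h2 | h2⟩ := h
  · subst h2; exact ⟨t e, h1.symm, rfl, fun Y => Iff.rfl⟩
  · subst h2; exact ⟨s e, h1, add_comm _ _, fun Y => by tauto⟩

theorem exists_even_at [Fintype V] (s t : E → V) (D : Finset E) (a b : V)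
    (hD : mbd s t D = Pi.single a 1 + Pi.single b 1) (e1 e2 : E) (h1 : e1 ∈ D) (h2 : e2 ∈ D)
    (h12 : e1 ≠ e2) (i1 : minc s t a e1) (i2 : minc s t a e2) :
    ∃ C ⊆ D, mbd s t C = 0 ∧ ∃ e ∈ C, minc s t a e := by
  classical
  -- either we find the even set or a closed set
  have step : ∀ e ∈ D, minc s t a e → (∃ C ⊆ D, mbd s t C = 0 ∧ ∃ e ∈ C, minc s t a e) ∨
      ∃ Y : Finset V, a ∉ Y ∧ b ∈ Y ∧ (∀ f ∈ D, f ≠ e → (s f ∈ Y ↔ t f ∈ Y)) ∧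
        ¬ (s e ∈ Y ↔ t e ∈ Y) := by
    intro e he hi
    obtain ⟨z, hz, hs, hc⟩ := minc_other s t a e hi
    rcases mbd_reach s t (D.erase e) z a with ⟨P, hP, hb⟩ | ⟨Y, hzY, haY, hY⟩
    · left
      refine ⟨symmDiff P {e}, ?_, ?_, e, ?_, hi⟩
      · intro x hx
        rcases Finset.mem_symmDiff.1 hx with h | h
        · exact Finset.mem_of_mem_erase (hP h.1)
        · rw [Finset.mem_singleton.1 h.1]; exact he
      · rw [mbd_symmDiff, mbd_singleton, hb, hs, add_comm (Pi.single z 1), fun_two_add_self]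
      · refine Finset.mem_symmDiff.2 (Or.inr ⟨Finset.mem_singleton_self _, fun h => ?_⟩)
        exact Finset.notMem_erase _ _ (hP h)
    · right
      have hpar := sum_mbd_closed s t (D.erase e) Y hY
      rw [mbd_erase s t D e he, hD, hs] at hpar
      have hb : b ∈ Y := by
        by_contra hb
        simp only [Pi.add_apply, Finset.sum_add_distrib, Pi.single_apply, Finset.sum_ite_eq',
          Finset.sum_ite_eq, haY, hb, hzY, if_true, if_false] at hpar
        revert hpar; decide
      refine ⟨Y, haY, hb, fun f hf hfe => hY f (Finset.mem_erase.2 ⟨hfe, hf⟩), ?_⟩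
      rw [hc]; tauto
  rcases step e1 h1 i1 with h | ⟨Y1, a1, b1, c1, d1⟩
  · exact h
  rcases step e2 h2 i2 with h | ⟨Y2, a2, b2, c2, d2⟩
  · exact h
  exfalso
  obtain ⟨z1, hz1, hs1, hc1⟩ := minc_other s t a e1 i1
  obtain ⟨z2, hz2, hs2, hc2⟩ := minc_other s t a e2 i2
  have hz1Y : z1 ∈ Y1 := by rw [hc1] at d1; tauto
  have hz1Y2 : z1 ∉ Y2 := by
    have := c2 e1 h1 h12; rw [hc1] at this; tauto
  have hcl : ∀ f ∈ D.erase e1, (s f ∈ Y1 \ Y2 ↔ t f ∈ Y1 \ Y2) := by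
    intro f hf
    obtain ⟨hf1, hf2⟩ := Finset.mem_erase.1 hf
    have q1 := c1 f hf2 hf1
    simp only [Finset.mem_sdiff]
    by_cases hfe : f = e2
    · subst hfe
      have r2 := (hc2 Y1).1 q1
      have : s f ∉ Y1 := by
        rcases i2 with ⟨_, h | h⟩
        · rw [h]; exact a1
        · rw [q1, h]; exact a1
      tauto
    · have q2 := c2 f hf2 hfe
      tauto
  have hpar := sum_mbd_closed s t (D.erase e1) _ hcl
  rw [mbd_erase s t D e1 h1, hD, hs1] at hpar
  have m1 : z1 ∈ Y1 \ Y2 := Finset.mem_sdiff.2 ⟨hz1Y, hz1Y2⟩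
  have m2 : b ∉ Y1 \ Y2 := fun h => (Finset.mem_sdiff.1 h).2 b2
  have m3 : a ∉ Y1 \ Y2 := fun h => a1 (Finset.mem_sdiff.1 h).1
  simp only [Pi.add_apply, Finset.sum_add_distrib, Pi.single_apply, Finset.sum_ite_eq',
          Finset.sum_ite_eq, m1, m2, m3, if_true, if_false] at hpar
  revert hpar; decide

end TJoins

set_option linter.unusedSectionVars false
set_option linter.unusedSimpArgs false
set_option linter.unusedVariables false
open SimpleGraph
section TJoins2
variable {V E : Type*} [DecidableEq V] [DecidableEq E]

open Classical in
theorem mbd_apply (s t : E → V) (F : Finset E) (a : V) :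
    mbd s t F a = ((F.filter (minc s t a)).card : ZMod 2) := by
  unfold mbd
  rw [Finset.sum_apply, Finset.card_filter, Nat.cast_sum]
  apply Finset.sum_congr rfl
  intro e _
  simp only [Pi.add_apply, Pi.single_apply, minc]
  have h11 : (1 : ZMod 2) + 1 = 0 := by decide
  by_cases h1 : s e = a <;> by_cases h2 : t e = a
  · simp [h1, h2, h11]
  · have : a ≠ t e := fun h => h2 h.symm
    simp [h1, h2, this]
  · have h1' : a ≠ s e := fun h => h1 h.symm
    simp [h1, h2, h1']
  · have h1' : a ≠ s e := fun h => h1 h.symm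
    have h2' : a ≠ t e := fun h => h2 h.symm
    simp [h1, h2, h1', h2']

theorem wt_erase (w : E → ℝ) (F : Finset E) (e : E) (he : e ∈ F) :
    ∑ x ∈ F.erase e, w x = ∑ x ∈ F, w x - w e := by
  rw [← Finset.sum_erase_add F w he]; ring

theorem wt_symmDiff_pair (w : E → ℝ) (J F C : Finset E) (hC : C ⊆ symmDiff J F) :
    ∑ x ∈ symmDiff J C, w x + ∑ x ∈ symmDiff F C, w x = ∑ x ∈ J, w x + ∑ x ∈ F, w x := by
  classical
  have key : ∀ A : Finset E, A ⊆ J ∪ F → ∑ x ∈ A, w x = ∑ x ∈ J ∪ F, if x ∈ A then w x else 0 := by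
    intro A hA
    rw [← Finset.sum_filter, Finset.filter_mem_eq_inter, Finset.inter_eq_right.2 hA]
  have hC2 : C ⊆ J ∪ F := fun x hx => by
    have := hC hx; rw [Finset.mem_symmDiff] at this; rw [Finset.mem_union]; tauto
  rw [key (symmDiff J C), key (symmDiff F C), key J, key F, ← Finset.sum_add_distrib,
    ← Finset.sum_add_distrib]
  · apply Finset.sum_congr rfl
    intro x hx
    have h := @hC x
    simp only [Finset.mem_symmDiff] at h ⊢
    by_cases h1 : x ∈ J <;> by_cases h2 : x ∈ F <;> by_cases h3 : x ∈ C <;> simp_all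
  · exact Finset.subset_union_right
  · exact Finset.subset_union_left
  · intro x hx; rw [Finset.mem_symmDiff] at hx; rcases hx with h | h
    · exact Finset.mem_union_right _ h.1
    · exact hC2 h.1
  · intro x hx; rw [Finset.mem_symmDiff] at hx; rcases hx with h | h
    · exact Finset.mem_union_left _ h.1
    · exact hC2 h.1

open Classical in
theorem exists_star [Fintype V] [Fintype E] (s t : E → V) (w : E → ℝ)
    (hpos : ∀ e, s e ≠ t e → 0 < w e) (T : V → ZMod 2) (hT : T ≠ 0)
    (hex : ∃ F, mbd s t F = T) :
    ∃ a, T a = 1 ∧ ∀ J, mbd s t J = T → (∀ F, mbd s t F = T → ∑ e ∈ J, w e ≤ ∑ e ∈ F, w e) →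
      (J.filter (minc s t a)).card = 1 := by
  -- minimise over all joins of `T + a + b`
  obtain ⟨F0, hF0⟩ := hex
  let S : Finset (V × V × Finset E) := Finset.univ.filter fun q =>
    mbd s t q.2.2 = T + (Pi.single q.1 1 + Pi.single q.2.1 1)
  have hT' : ∃ v, T v ≠ 0 := by
    by_contra h; push Not at h; exact hT (funext h)
  obtain ⟨v0, hv0⟩ := hT'
  have hS : S.Nonempty := ⟨(v0, v0, F0), by
    simp only [S, Finset.mem_filter, Finset.mem_univ, true_and]
    rw [fun_two_add_self, add_zero, hF0]⟩
  obtain ⟨⟨a, b, F⟩, hq, hmin⟩ := Finset.exists_min_image S (fun q => ∑ e ∈ q.2.2, w e) hS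
  have hF : mbd s t F = T + (Pi.single a 1 + Pi.single b 1) := by
    simpa [S] using hq
  have hmin' : ∀ (x y : V) (G : Finset E), mbd s t G = T + (Pi.single x 1 + Pi.single y 1) →
      ∑ e ∈ F, w e ≤ ∑ e ∈ G, w e := by
    intro x y G hG
    exact hmin (x, y, G) (by simpa [S] using hG)
  -- no minimiser has an edge at `a`
  have noedge : ∀ G, mbd s t G = T + (Pi.single a 1 + Pi.single b 1) →
      ∑ e ∈ G, w e ≤ ∑ e ∈ F, w e → ∀ e ∈ G, ¬ minc s t a e := by
    intro G hG hle e he hi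
    obtain ⟨z, hz, hs, _⟩ := minc_other s t a e hi
    have h1 : mbd s t (G.erase e) = T + (Pi.single b 1 + Pi.single z 1) := by
      rw [mbd_erase s t G e he, hG, hs]
      calc _ = T + (Pi.single b 1 + Pi.single z 1) + (Pi.single a 1 + Pi.single a 1) := by abel
        _ = _ := by rw [fun_two_add_self, add_zero]
    have h2 := hmin' _ _ _ h1
    rw [wt_erase w G e he] at h2
    have := hpos e hi.1
    linarith
  have hlt : ∀ J, mbd s t J = T → ∑ e ∈ F, w e < ∑ e ∈ J, w e := by
    intro J hJ
    have : ∃ e ∈ J, s e ≠ t e := by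
      by_contra h; push Not at h
      apply hv0
      rw [← hJ, mbd_apply]
      rw [Finset.card_eq_zero.2]; · rfl
      rw [Finset.filter_eq_empty_iff]
      intro e he hi; exact hi.1 (h e he)
    obtain ⟨e, he, hn⟩ := this
    have h2 := hmin' _ _ _ (by rw [mbd_erase s t J e he, hJ] :
      mbd s t (J.erase e) = T + (Pi.single (s e) 1 + Pi.single (t e) 1))
    rw [wt_erase w J e he] at h2
    have := hpos e hn
    linarith
  have hab : a ≠ b := by
    rintro rfl
    rw [fun_two_add_self, add_zero] at hF
    exact lt_irrefl _ (hlt F hF)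
  have hTa : T a = 1 := by
    have h1 : mbd s t F a = 0 := by
      rw [mbd_apply, Finset.card_eq_zero.2]; · rfl
      rw [Finset.filter_eq_empty_iff]
      intro e he; exact noedge F hF le_rfl e he
    rw [hF] at h1
    simp only [Pi.add_apply, Pi.single_eq_same, Pi.single_apply, if_neg hab, add_zero] at h1
    generalize T a = x at h1
    revert h1; revert x; decide
  refine ⟨a, hTa, fun J hJ hJmin => ?_⟩
  by_contra hne
  have hcard : (J.filter (minc s t a)).card ≠ 0 := by
    intro h0
    have := mbd_apply s t J a
    rw [h0, hJ, hTa] at this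
    revert this; decide
  have h2 : 1 < (J.filter (minc s t a)).card := by omega
  obtain ⟨e1, m1, e2, m2, h12⟩ := Finset.one_lt_card.1 h2
  rw [Finset.mem_filter] at m1 m2
  have hD : mbd s t (symmDiff J F) = Pi.single a 1 + Pi.single b 1 := by
    rw [mbd_symmDiff, hJ, hF, ← add_assoc, fun_two_add_self, zero_add]
  have inD : ∀ e ∈ J, minc s t a e → e ∈ symmDiff J F := fun e he hi =>
    Finset.mem_symmDiff.2 (Or.inl ⟨he, fun h => noedge F hF le_rfl e h hi⟩)
  obtain ⟨C, hC, hC0, e, heC, hei⟩ := exists_even_at s t _ a b hD e1 e2 (inD e1 m1.1 m1.2)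
    (inD e2 m2.1 m2.2) h12 m1.2 m2.2
  have hw := wt_symmDiff_pair w J F C hC
  have hw1 := hJmin (symmDiff J C) (by rw [mbd_symmDiff, hJ, hC0, add_zero])
  refine noedge (symmDiff F C) (by rw [mbd_symmDiff, hF, hC0, add_zero]) (by linarith) e
    (Finset.mem_symmDiff.2 (Or.inr ⟨heC, fun h => noedge F hF le_rfl e h hei⟩)) hei

theorem mbd_insert (s t : E → V) (e : E) (F : Finset E) (he : e ∉ F) :
    mbd s t (insert e F) = (Pi.single (s e) 1 + Pi.single (t e) 1) + mbd s t F := by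
  simp only [mbd]; rw [Finset.sum_insert he]

end TJoins2

section Contract
variable {V E : Type*} [DecidableEq V] [DecidableEq E] [Fintype V] [Fintype E]

/-- Pushing a mod-2 function forward along a vertex map. -/
def mpush {V' : Type*} [DecidableEq V'] (π : V → V') (f : V → ZMod 2) : V' → ZMod 2 :=
  fun v' => ∑ u ∈ Finset.univ.filter (fun u => π u = v'), f u

theorem mpush_add {V' : Type*} [DecidableEq V'] (π : V → V') (f g : V → ZMod 2) :
    mpush π (f + g) = mpush π f + mpush π g := by
  funext v; simp [mpush, Finset.sum_add_distrib]

theorem mpush_single {V' : Type*} [DecidableEq V'] (π : V → V') (u : V) :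
    mpush π (Pi.single u 1) = Pi.single (π u) 1 := by
  funext v
  simp only [mpush, Pi.single_apply, Finset.sum_ite_eq', Finset.mem_filter, Finset.mem_univ,
    true_and]
  by_cases h : π u = v
  · simp [h]
  · have : v ≠ π u := fun hh => h hh.symm
    simp [h, this]

theorem mbd_push {V' : Type*} [DecidableEq V'] (π : V → V') (s t : E → V) (F : Finset E) :
    mbd (fun e => π (s e)) (fun e => π (t e)) F = mpush π (mbd s t F) := by
  induction F using Finset.induction_on with
  | empty => rw [mbd_empty, mbd_empty]; funext v; simp [mpush]
  | insert e F he ih =>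
    rw [mbd_insert _ _ _ _ he, mbd_insert _ _ _ _ he, mpush_add, mpush_add, mpush_single,
      mpush_single, ih]

theorem sum_mpush {V' : Type*} [DecidableEq V'] [Fintype V'] (π : V → V') (f : V → ZMod 2)
    (X : Finset V') :
    ∑ v ∈ X, mpush π f v = ∑ u ∈ Finset.univ.filter (fun u => π u ∈ X), f u := by
  simp only [mpush]
  rw [← Finset.sum_fiberwise_of_maps_to (s := Finset.univ.filter (fun u => π u ∈ X)) (t := X)
    (g := π)]
  · apply Finset.sum_congr rfl
    intro v hv
    apply Finset.sum_congr _ (fun _ _ => rfl)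
    ext u; simp only [Finset.mem_filter, Finset.mem_univ, true_and]
    constructor
    · rintro rfl; exact ⟨hv, rfl⟩
    · exact fun h => h.2
  · intro u hu; simpa using hu

end Contract

theorem exists_contract_map {V : Type u} [Fintype V] (p q : V) (hne : p ≠ q) :
    ∃ (V' : Type u) (_ : Fintype V') (π : V → V'), Fintype.card V' < Fintype.card V ∧
      ∀ v, v ≠ q → ∀ u, (π u = π v ↔ u = v ∨ (u = q ∧ v = p)) := by
  classical
  refine ⟨{v : V // v ≠ q}, inferInstance, fun v => if h : v = q then ⟨p, hne⟩ else ⟨v, h⟩,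
    Fintype.card_subtype_lt (x := q) (by simp), ?_⟩
  intro v hv u
  by_cases hu : u = q
  · have h1 : u ≠ v := fun h => hv (h ▸ hu)
    simp only [dif_pos hu, dif_neg hv, Subtype.mk.injEq]
    constructor
    · intro h; exact Or.inr ⟨hu, h.symm⟩
    · rintro (h | h)
      · exact absurd h h1
      · exact h.2.symm
  · simp only [dif_neg hu, dif_neg hv, Subtype.mk.injEq]
    constructor
    · intro h; exact Or.inl h
    · rintro (h | h)
      · exact h
      · exact absurd h.1 hu



open Classical in
/-- The weighted T-join theorem: if every T-odd cut has at least three edges, some T-join has at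
most a third of the total weight. -/
theorem exists_light_tjoin_aux {E : Type*} [Fintype E] : ∀ (n : ℕ) (m : ℕ) (V : Type u)
    [Fintype V] (s t : E → V) (w : E → ℝ) (T : V → ZMod 2),
    Fintype.card V = n → (∀ e, 0 ≤ w e) → (∃ F, mbd s t F = T) →
    (∀ X : Finset V, ∑ v ∈ X, T v = 1 →
      3 ≤ (Finset.univ.filter (fun e => ¬ (s e ∈ X ↔ t e ∈ X))).card) →
    (Finset.univ.filter (fun F : Finset E => mbd s t F = T ∧
      ∃ G, mbd s t G = T ∧ ∑ e ∈ G, w e < ∑ e ∈ F, w e)).card +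
      (Finset.univ.filter (fun e => s e ≠ t e ∧ 0 < w e)).card = m →
    ∃ F, mbd s t F = T ∧ 3 * ∑ e ∈ F, w e ≤ ∑ e, w e := by
  intro n
  induction n using Nat.strong_induction_on with
  | _ n ihn =>
  intro m
  induction m using Nat.strong_induction_on with
  | _ m ihm =>
  intro V _ s t w T hn hw hex hcut hm
  by_cases hT : T = 0
  · refine ⟨∅, by rw [mbd_empty, hT], ?_⟩
    simp; exact Finset.sum_nonneg fun e _ => hw e
  by_cases hz : ∃ e, s e ≠ t e ∧ w e = 0
  · -- contract a zero edge
    obtain ⟨e0, hne, hw0⟩ := hz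
    obtain ⟨V', _, π, hcard, hπ⟩ := exists_contract_map (s e0) (t e0) hne
    rw [hn] at hcard
    obtain ⟨F, hF, hFw⟩ := ihn _ hcard _ V' (fun e => π (s e)) (fun e => π (t e)) w (mpush π T) rfl hw
      (by obtain ⟨F, hF⟩ := hex; exact ⟨F, by rw [mbd_push, hF]⟩)
      (by
        intro X hX
        rw [sum_mpush] at hX
        have := hcut _ hX
        simpa using this) rfl
    rw [mbd_push] at hF
    -- lift
    set g := mbd s t F + T with hg
    have hg0 : mpush π g = 0 := by rw [hg, mpush_add, hF, fun_two_add_self]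
    have hTg : T = mbd s t F + g := by
      rw [hg, ← add_assoc, fun_two_add_self, zero_add]
    have hg1 : ∀ v, v ≠ t e0 → v ≠ s e0 → g v = 0 := by
      intro v hv1 hv2
      have := congrFun hg0 (π v)
      have hf : (Finset.univ.filter (fun u => π u = π v)) = {v} := by
        ext u; simp [hπ v hv1 u, hv2]
      simp only [mpush, hf, Finset.sum_singleton, Pi.zero_apply] at this
      exact this
    have hg2 : g (s e0) + g (t e0) = 0 := by
      have := congrFun hg0 (π (s e0))
      have hf : (Finset.univ.filter (fun u => π u = π (s e0))) = {s e0, t e0} := by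
        ext u; simp [hπ (s e0) hne u]
      simp only [mpush, hf, Pi.zero_apply] at this
      rwa [Finset.sum_pair hne] at this
    by_cases hgs : g (s e0) = 0
    · refine ⟨F, ?_, hFw⟩
      rw [hTg]
      have : g = 0 := by
        funext v
        by_cases h1 : v = t e0
        · subst h1; rw [hgs, zero_add] at hg2; exact hg2
        · by_cases h2 : v = s e0
          · subst h2; exact hgs
          · exact hg1 v h1 h2
      rw [this, add_zero]
    · have hone : ∀ x y : ZMod 2, x ≠ 0 → x + y = 0 → x = 1 ∧ y = 1 := by decide
      obtain ⟨o1, o2⟩ := hone _ _ hgs hg2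
      refine ⟨symmDiff F {e0}, ?_, ?_⟩
      · rw [mbd_symmDiff, mbd_singleton, hTg]
        congr 1
        funext v
        by_cases h1 : v = t e0
        · subst h1; simp [o2, hne]
        · by_cases h2 : v = s e0
          · subst h2; simp [o1, hne]
          · simp [hg1 v h1 h2, h1, h2]
      · refine le_trans ?_ hFw
        have : ∑ e ∈ symmDiff F {e0}, w e ≤ ∑ e ∈ F, w e := by
          calc ∑ e ∈ symmDiff F {e0}, w e ≤ ∑ e ∈ insert e0 F, w e := by
                apply Finset.sum_le_sum_of_subset_of_nonneg
                · intro x hx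
                  rw [Finset.mem_symmDiff] at hx
                  simp only [Finset.mem_singleton] at hx
                  rw [Finset.mem_insert]; tauto
                · intro i _ _; exact hw i
            _ ≤ _ := by
                by_cases h : e0 ∈ F
                · rw [Finset.insert_eq_of_mem h]
                · rw [Finset.sum_insert h, hw0, zero_add]
        linarith
  -- all non-loop weights positive
  have hpos : ∀ e, s e ≠ t e → 0 < w e := fun e he =>
    lt_of_le_of_ne (hw e) fun h => hz ⟨e, he, h.symm⟩
  obtain ⟨a, hTa, hstar⟩ := exists_star s t w hpos T hT hex
  obtain ⟨F0, hF0⟩ := hex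
  obtain ⟨J, hJ, hJmin⟩ := Finset.exists_min_image
    (Finset.univ.filter fun F : Finset E => mbd s t F = T) (fun F => ∑ e ∈ F, w e)
    ⟨F0, by simpa using hF0⟩
  replace hJ : mbd s t J = T := by simpa using hJ
  replace hJmin : ∀ F, mbd s t F = T → ∑ e ∈ J, w e ≤ ∑ e ∈ F, w e := fun F hF =>
    hJmin F (by simpa using hF)
  let k : Finset E → ℕ := fun F => (F.filter (minc s t a)).card
  have hk : ∀ F, mbd s t F = T → 1 ≤ k F := by
    intro F hF
    by_contra h
    have h0 : (F.filter (minc s t a)).card = 0 := by simp only [k] at h; omega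
    have := mbd_apply s t F a
    rw [h0, hF, hTa] at this
    revert this; decide
  have hkJ : k J = 1 := hstar J hJ hJmin
  have hdeg : 3 ≤ (Finset.univ.filter (minc s t a)).card := by
    have h := hcut {a} (by simp [hTa])
    refine le_trans h (Finset.card_le_card ?_)
    intro e he
    simp only [Finset.mem_filter, Finset.mem_univ, true_and, Finset.mem_singleton] at he ⊢
    refine ⟨fun h => he (by rw [h]), ?_⟩
    by_contra h; push Not at h; exact he (by simp [h.1, h.2])
  let A : Finset ℝ := (Finset.univ.filter (minc s t a)).image w ∪
    (Finset.univ.filter (fun F : Finset E => mbd s t F = T ∧ 2 ≤ k F)).image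
      (fun F => (∑ e ∈ F, w e - ∑ e ∈ J, w e) / ((k F : ℝ) - 1))
  have hA : A.Nonempty := by
    obtain ⟨e, he⟩ := Finset.card_pos.1 (by omega : 0 < (Finset.univ.filter (minc s t a)).card)
    exact ⟨w e, Finset.mem_union_left _ (Finset.mem_image_of_mem _ he)⟩
  set ε := A.min' hA with hε
  have hεA : ε ∈ A := Finset.min'_mem A hA
  have hstrict : ∀ F, mbd s t F = T → 2 ≤ k F → ∑ e ∈ J, w e < ∑ e ∈ F, w e := by
    intro F hF h2
    refine lt_of_le_of_ne (hJmin F hF) fun h => ?_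
    have := hstar F hF (fun G hG => by rw [← h]; exact hJmin G hG)
    simp only [k] at h2; omega
  have hεpos : 0 < ε := by
    rcases Finset.mem_union.1 hεA with h | h
    · obtain ⟨e, he, h⟩ := Finset.mem_image.1 h
      rw [← h]; exact hpos e (Finset.mem_filter.1 he).2.1
    · obtain ⟨F, hF, h⟩ := Finset.mem_image.1 h
      rw [← h]
      obtain ⟨h1, h2⟩ := (Finset.mem_filter.1 hF).2
      have := hstrict F h1 h2
      have h3 : (2 : ℝ) ≤ k F := by exact_mod_cast h2
      apply div_pos <;> linarith
  have hε1 : ∀ e, minc s t a e → ε ≤ w e := fun e he => Finset.min'_le A _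
    (Finset.mem_union_left _ (Finset.mem_image_of_mem _ (by simpa using he)))
  have hε2 : ∀ F, mbd s t F = T → ε * ((k F : ℝ) - 1) ≤ ∑ e ∈ F, w e - ∑ e ∈ J, w e := by
    intro F hF
    by_cases h2 : 2 ≤ k F
    · have h := Finset.min'_le A ((∑ e ∈ F, w e - ∑ e ∈ J, w e) / ((k F : ℝ) - 1))
        (Finset.mem_union_right _ (Finset.mem_image_of_mem
          (fun F : Finset E => (∑ e ∈ F, w e - ∑ e ∈ J, w e) / ((k F : ℝ) - 1))
          (Finset.mem_filter.2 ⟨Finset.mem_univ F, hF, h2⟩)))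
      have h3 : (2 : ℝ) ≤ k F := by exact_mod_cast h2
      rwa [← hε, le_div_iff₀ (by linarith)] at h
    · have h1 : k F = 1 := by have := hk F hF; omega
      rw [h1]; have := hJmin F hF; simp; linarith
  let w' : E → ℝ := fun e => w e - if minc s t a e then ε else 0
  have hw'F : ∀ F : Finset E, ∑ e ∈ F, w' e = ∑ e ∈ F, w e - ε * k F := by
    intro F
    simp only [w', Finset.sum_sub_distrib, k]
    rw [← Finset.sum_filter, Finset.sum_const, nsmul_eq_mul, mul_comm]
  have hw'J : ∀ F, mbd s t F = T → ∑ e ∈ J, w' e ≤ ∑ e ∈ F, w' e := by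
    intro F hF
    rw [hw'F, hw'F, hkJ]
    have := hε2 F hF
    push_cast; linarith
  have hw' : ∀ e, 0 ≤ w' e := by
    intro e
    simp only [w']
    split_ifs with h
    · linarith [hε1 e h]
    · linarith [hw e]
  have sub1 : (Finset.univ.filter (fun F : Finset E => mbd s t F = T ∧
      ∃ G, mbd s t G = T ∧ ∑ e ∈ G, w' e < ∑ e ∈ F, w' e)) ⊆
      (Finset.univ.filter (fun F : Finset E => mbd s t F = T ∧
      ∃ G, mbd s t G = T ∧ ∑ e ∈ G, w e < ∑ e ∈ F, w e)) := by
    intro F hF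
    simp only [Finset.mem_filter, Finset.mem_univ, true_and] at hF ⊢
    obtain ⟨h1, G, hG, hlt⟩ := hF
    refine ⟨h1, J, hJ, ?_⟩
    have h2 := hw'J G hG
    rw [hw'F J, hkJ] at h2
    rw [hw'F F] at hlt
    have h3 : (1 : ℝ) ≤ k F := by exact_mod_cast hk F h1
    have h4 : ε * 1 ≤ ε * k F := mul_le_mul_of_nonneg_left h3 hεpos.le
    push_cast at h2
    linarith
  have sub2 : (Finset.univ.filter (fun e => s e ≠ t e ∧ 0 < w' e)) ⊆
      (Finset.univ.filter (fun e => s e ≠ t e ∧ 0 < w e)) := by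
    intro e he
    simp only [Finset.mem_filter, Finset.mem_univ, true_and] at he ⊢
    exact ⟨he.1, hpos e he.1⟩
  have hlt : (Finset.univ.filter (fun F : Finset E => mbd s t F = T ∧
      ∃ G, mbd s t G = T ∧ ∑ e ∈ G, w' e < ∑ e ∈ F, w' e)).card +
      (Finset.univ.filter (fun e => s e ≠ t e ∧ 0 < w' e)).card < m := by
    rw [← hm]
    rcases Finset.mem_union.1 hεA with h | h
    · obtain ⟨e, he, h⟩ := Finset.mem_image.1 h
      have hi := (Finset.mem_filter.1 he).2
      have : (Finset.univ.filter (fun e => s e ≠ t e ∧ 0 < w' e)).card <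
        (Finset.univ.filter (fun e => s e ≠ t e ∧ 0 < w e)).card := by
        apply Finset.card_lt_card
        refine ⟨sub2, fun hh => ?_⟩
        have h1 : e ∈ (Finset.univ.filter (fun e => s e ≠ t e ∧ 0 < w e)) := by
          simp [hi.1, hpos e hi.1]
        have h2 := (Finset.mem_filter.1 (hh h1)).2.2
        simp only [w', if_pos hi] at h2
        linarith
      have := Finset.card_le_card sub1
      omega
    · obtain ⟨F, hF, h⟩ := Finset.mem_image.1 h
      obtain ⟨h1, h2⟩ := (Finset.mem_filter.1 hF).2
      have h3 : (2 : ℝ) ≤ k F := by exact_mod_cast h2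
      rw [div_eq_iff (by linarith)] at h
      have : (Finset.univ.filter (fun F : Finset E => mbd s t F = T ∧
          ∃ G, mbd s t G = T ∧ ∑ e ∈ G, w' e < ∑ e ∈ F, w' e)).card <
        (Finset.univ.filter (fun F : Finset E => mbd s t F = T ∧
          ∃ G, mbd s t G = T ∧ ∑ e ∈ G, w e < ∑ e ∈ F, w e)).card := by
        apply Finset.card_lt_card
        refine ⟨sub1, fun hh => ?_⟩
        have m1 : F ∈ (Finset.univ.filter (fun F : Finset E => mbd s t F = T ∧
          ∃ G, mbd s t G = T ∧ ∑ e ∈ G, w e < ∑ e ∈ F, w e)) := by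
          simp only [Finset.mem_filter, Finset.mem_univ, true_and]
          exact ⟨h1, J, hJ, hstrict F h1 h2⟩
        obtain ⟨G, hG, hlt⟩ := (Finset.mem_filter.1 (hh m1)).2.2
        have := hw'J G hG
        rw [hw'F J, hkJ] at this
        rw [hw'F F] at hlt
        push_cast at this
        linarith
      have := Finset.card_le_card sub2
      omega
  obtain ⟨F, hF, hFw⟩ := ihm _ hlt V s t w' T hn hw' ⟨F0, hF0⟩ hcut rfl
  refine ⟨J, hJ, ?_⟩
  have e1 := hw'J F hF
  have e2 := hw'F J
  have e3 := hw'F Finset.univ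
  rw [hkJ] at e2
  have h3 : (3 : ℝ) ≤ k Finset.univ := by exact_mod_cast hdeg
  have h4 : ε * 3 ≤ ε * k Finset.univ := mul_le_mul_of_nonneg_left h3 hεpos.le
  push_cast at e2
  linarith

open Classical in
theorem exists_light_tjoin {V E : Type*} [Fintype V] [Fintype E] (s t : E → V) (w : E → ℝ)
    (T : V → ZMod 2) (hw : ∀ e, 0 ≤ w e) (hex : ∃ F, mbd s t F = T)
    (hcut : ∀ X : Finset V, ∑ v ∈ X, T v = 1 →
      3 ≤ (Finset.univ.filter (fun e => ¬ (s e ∈ X ↔ t e ∈ X))).card) :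
    ∃ F, mbd s t F = T ∧ 3 * ∑ e ∈ F, w e ≤ ∑ e, w e :=
  exists_light_tjoin_aux _ _ V s t w T rfl hw hex hcut rfl

set_option linter.unusedSectionVars false
set_option linter.unusedSimpArgs false
set_option linter.unusedVariables false
open SimpleGraph

/-! ### Part 2: removable sets -/
section Removable
open Classical
variable {V E : Type*} [Fintype V] [Fintype E]

/-- `A` connects `S`: every proper nonempty part of `S` is left by an `A`-edge inside `S`. -/
def mconn (s t : E → V) (A : Finset E) (S : Finset V) : Prop :=
  ∀ X ⊆ S, X.Nonempty → X ≠ S →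
    ∃ e ∈ A, (s e ∈ X ∧ t e ∈ S ∧ t e ∉ X) ∨ (t e ∈ X ∧ s e ∈ S ∧ s e ∉ X)

/-- Edges inside `S`. -/
noncomputable def medges (s t : E → V) (S : Finset V) : Finset E :=
  Finset.univ.filter fun e => s e ∈ S ∧ t e ∈ S

/-- Degree of `v` in the edge set `A` (loopless case). -/
noncomputable def mdeg (s t : E → V) (A : Finset E) (v : V) : ℕ :=
  (A.filter fun e => s e = v ∨ t e = v).card

theorem mdeg_mono (s t : E → V) {A B : Finset E} (h : A ⊆ B) (v : V) :
    mdeg s t A v ≤ mdeg s t B v :=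
  Finset.card_le_card (Finset.filter_subset_filter _ h)

theorem exists_removable (s t : E → V) (hl : ∀ e, s e ≠ t e)
    (hd : ∀ v, mdeg s t Finset.univ v ≤ 3) :
    ∀ (n : ℕ) (S : Finset V) (r : V), S.card = n → r ∈ S → mconn s t Finset.univ S →
      (2 ≤ mdeg s t (medges s t S) r → mdeg s t Finset.univ r = 3) →
      ∃ R ⊆ medges s t S,
        (∀ e ∈ R, mdeg s t Finset.univ (s e) = 3 ∨ mdeg s t Finset.univ (t e) = 3) ∧
        (∀ J : Finset E, (∀ v, mdeg s t Finset.univ v = 3 → mdeg s t J v ≤ 1) →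
          mconn s t (Finset.univ \ (J ∩ R)) S) ∧
        2 * (medges s t S).card + 2 ≤ R.card + (mdeg s t (medges s t S) r - 2) + 2 * S.card := by
  intro n
  induction n using Nat.strong_induction_on with
  | _ n ih =>
  intro S r hn hr hS hrQ
  by_cases hSr : S = {r}
  · subst hSr
    refine ⟨∅, by simp, by simp, ?_, ?_⟩
    · intro J _ X hX hne hX2
      rcases Finset.subset_singleton_iff.1 hX with h | h
      · exact absurd h hne.ne_empty
      · exact absurd h hX2
    · have : medges s t {r} = ∅ := by
        simp only [medges, Finset.filter_eq_empty_iff, Finset.mem_univ, Finset.mem_singleton,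
          true_imp_iff]
        rintro e ⟨h1, h2⟩; exact hl e (h1.trans h2.symm)
      rw [this]; simp
  -- minimal closed part of S \ {r}
  let P : Finset V → Prop := fun C => C.Nonempty ∧ C ⊆ S.erase r ∧
    ∀ e, ¬ (s e ∈ C ∧ t e ∈ S.erase r ∧ t e ∉ C) ∧ ¬ (t e ∈ C ∧ s e ∈ S.erase r ∧ s e ∉ C)
  have hP : ∃ C, P C := by
    refine ⟨S.erase r, ?_, Finset.Subset.refl _, fun e => ⟨fun h => h.2.2 h.2.1, fun h => h.2.2 h.2.1⟩⟩
    rw [Finset.nonempty_iff_ne_empty]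
    intro h
    rcases Finset.erase_eq_empty_iff _ _ |>.1 h with h | h
    · rw [h] at hr; simp at hr
    · exact hSr h
  obtain ⟨C, hCmem, hCmin⟩ := Finset.exists_min_image (Finset.univ.filter P) Finset.card
    (by obtain ⟨C, hC⟩ := hP; exact ⟨C, by simpa using hC⟩)
  obtain ⟨hCne, hCsub, hCcl⟩ : P C := by simpa using hCmem
  have hCS : C ⊆ S := hCsub.trans (Finset.erase_subset _ _)
  have hrC : r ∉ C := fun h => by simpa using hCsub h
  have hCconn : mconn s t Finset.univ C := by
    intro X hX hXne hXC
    by_contra hno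
    push Not at hno
    have hPX : P X := by
      refine ⟨hXne, hX.trans hCsub, fun e => ⟨?_, ?_⟩⟩
      · rintro ⟨h1, h2, h3⟩
        have h4 := (hno e (Finset.mem_univ e)).1 h1
        by_cases h5 : t e ∈ C
        · exact h3 (h4 h5)
        · exact (hCcl e).1 ⟨hX h1, h2, h5⟩
      · rintro ⟨h1, h2, h3⟩
        have h4 := (hno e (Finset.mem_univ e)).2 h1
        by_cases h5 : s e ∈ C
        · exact h3 (h4 h5)
        · exact (hCcl e).2 ⟨hX h1, h2, h5⟩
    have h1 := hCmin X (by simpa using hPX)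
    exact hXC (Finset.eq_of_subset_of_card_le hX h1)
  set S' := S \ C with hS'
  have hrS' : r ∈ S' := by simp [hS', hr, hrC]
  have hS'conn : mconn s t Finset.univ S' := by
    have key : ∀ X ⊆ S', X.Nonempty → r ∉ X → ∃ e,
        (s e ∈ X ∧ t e ∈ S' ∧ t e ∉ X) ∨ (t e ∈ X ∧ s e ∈ S' ∧ s e ∉ X) := by
      intro X hX hXne hrX
      have hXS : X ⊆ S := hX.trans Finset.sdiff_subset
      obtain ⟨e, -, he⟩ := hS X hXS hXne (fun h => hrX (h ▸ hr))
      refine ⟨e, ?_⟩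
      have aux : ∀ v ∈ X, v ∈ S.erase r ∧ v ∉ C := fun v hv =>
        ⟨Finset.mem_erase.2 ⟨fun h => hrX (h ▸ hv), hXS hv⟩, (Finset.mem_sdiff.1 (hX hv)).2⟩
      rcases he with ⟨h1, h2, h3⟩ | ⟨h1, h2, h3⟩
      · refine Or.inl ⟨h1, Finset.mem_sdiff.2 ⟨h2, fun h => ?_⟩, h3⟩
        exact (hCcl e).2 ⟨h, aux _ h1⟩
      · refine Or.inr ⟨h1, Finset.mem_sdiff.2 ⟨h2, fun h => ?_⟩, h3⟩
        exact (hCcl e).1 ⟨h, aux _ h1⟩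
    intro X hX hXne hXS
    by_cases hrX : r ∈ X
    · have : (S' \ X).Nonempty := by
        rw [Finset.sdiff_nonempty]; exact fun h => hXS (Finset.Subset.antisymm hX h)
      obtain ⟨e, he⟩ := key (S' \ X) Finset.sdiff_subset this (by simp [hrX])
      refine ⟨e, Finset.mem_univ e, ?_⟩
      simp only [Finset.mem_sdiff (s := S'), not_and, not_not] at he
      rcases he with ⟨h1, h2, h3⟩ | ⟨h1, h2, h3⟩
      · exact Or.inr ⟨h3 h2, h1.1, h1.2⟩
      · exact Or.inl ⟨h3 h2, h1.1, h1.2⟩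
    · obtain ⟨e, he⟩ := key X hX hXne hrX
      exact ⟨e, Finset.mem_univ e, he⟩
  let N : Finset E := Finset.univ.filter fun e => (s e = r ∧ t e ∈ C) ∨ (t e = r ∧ s e ∈ C)
  have hcross : ∀ e, (s e ∈ C ∧ t e ∈ S ∧ t e ∉ C) ∨ (t e ∈ C ∧ s e ∈ S ∧ s e ∉ C) → e ∈ N := by
    intro e he
    simp only [N, Finset.mem_filter, Finset.mem_univ, true_and]
    rcases he with ⟨h1, h2, h3⟩ | ⟨h1, h2, h3⟩
    · right; refine ⟨?_, h1⟩
      by_contra h; exact (hCcl e).1 ⟨h1, Finset.mem_erase.2 ⟨h, h2⟩, h3⟩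
    · left; refine ⟨?_, h1⟩
      by_contra h; exact (hCcl e).2 ⟨h1, Finset.mem_erase.2 ⟨h, h2⟩, h3⟩
  obtain ⟨e0, -, he0⟩ := hS C hCS hCne (fun h => hrC (h ▸ hr))
  have he0N := hcross e0 he0
  have hNpos : 1 ≤ N.card := Finset.card_pos.2 ⟨e0, he0N⟩
  obtain ⟨r', hr'C, hr'e⟩ : ∃ r' ∈ C, s e0 = r' ∨ t e0 = r' := by
    rcases he0 with h | h
    · exact ⟨_, h.1, Or.inl rfl⟩
    · exact ⟨_, h.1, Or.inr rfl⟩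
  -- edge partition
  have memS : ∀ e, e ∈ medges s t S ↔ e ∈ medges s t C ∨ e ∈ medges s t S' ∨ e ∈ N := by
    intro e
    simp only [medges, Finset.mem_filter, Finset.mem_univ, true_and, N, hS', Finset.mem_sdiff]
    constructor
    · rintro ⟨h1, h2⟩
      by_cases h3 : s e ∈ C <;> by_cases h4 : t e ∈ C
      · exact Or.inl ⟨h3, h4⟩
      · have := hcross e (Or.inl ⟨h3, h2, h4⟩)
        simp only [N, Finset.mem_filter, Finset.mem_univ, true_and] at this
        exact Or.inr (Or.inr this)
      · have := hcross e (Or.inr ⟨h4, h1, h3⟩)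
        simp only [N, Finset.mem_filter, Finset.mem_univ, true_and] at this
        exact Or.inr (Or.inr this)
      · exact Or.inr (Or.inl ⟨⟨h1, h3⟩, h2, h4⟩)
    · rintro (⟨h1, h2⟩ | ⟨h1, h2⟩ | ⟨h1, h2⟩ | ⟨h1, h2⟩)
      · exact ⟨hCS h1, hCS h2⟩
      · exact ⟨h1.1, h2.1⟩
      · exact ⟨h1 ▸ hr, hCS h2⟩
      · exact ⟨hCS h2, h1 ▸ hr⟩
  have dCS : Disjoint (medges s t C) (medges s t S') := by
    rw [Finset.disjoint_left]; intro e h1 h2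
    simp only [medges, Finset.mem_filter, Finset.mem_univ, true_and, hS', Finset.mem_sdiff] at h1 h2
    exact h2.1.2 h1.1
  have dCN : Disjoint (medges s t C) N := by
    rw [Finset.disjoint_left]; intro e h1 h2
    simp only [medges, N, Finset.mem_filter, Finset.mem_univ, true_and] at h1 h2
    rcases h2 with h2 | h2
    · exact hrC (h2.1 ▸ h1.1)
    · exact hrC (h2.1 ▸ h1.2)
  have dSN : Disjoint (medges s t S') N := by
    rw [Finset.disjoint_left]; intro e h1 h2
    simp only [medges, N, Finset.mem_filter, Finset.mem_univ, true_and, hS', Finset.mem_sdiff] at h1 h2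
    rcases h2 with h2 | h2
    · exact h1.2.2 h2.2
    · exact h1.1.2 h2.2
  have hEq : medges s t S = medges s t C ∪ (medges s t S' ∪ N) := by
    ext e; rw [memS]; simp only [Finset.mem_union]
  have hcardE : (medges s t S).card = (medges s t C).card + ((medges s t S').card + N.card) := by
    rw [hEq, Finset.card_union_of_disjoint, Finset.card_union_of_disjoint dSN]
    exact Finset.disjoint_union_right.2 ⟨dCS, dCN⟩
  have hdegr : mdeg s t (medges s t S) r = mdeg s t (medges s t S') r + N.card := by
    unfold mdeg
    rw [← Finset.card_union_of_disjoint]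
    · congr 1
      ext e
      simp only [Finset.mem_filter, Finset.mem_union, memS]
      constructor
      · rintro ⟨h1 | h1 | h1, h2⟩
        · exfalso
          simp only [medges, Finset.mem_filter, Finset.mem_univ, true_and] at h1
          rcases h2 with h2 | h2
          · exact hrC (h2 ▸ h1.1)
          · exact hrC (h2 ▸ h1.2)
        · exact Or.inl ⟨h1, h2⟩
        · exact Or.inr h1
      · rintro (h | h)
        · exact ⟨Or.inr (Or.inl h.1), h.2⟩
        · refine ⟨Or.inr (Or.inr h), ?_⟩
          simp only [N, Finset.mem_filter, Finset.mem_univ, true_and] at h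
          tauto
    · exact Finset.disjoint_of_subset_left (Finset.filter_subset _ _) dSN
  have hdegr' : mdeg s t (medges s t C) r' + 1 ≤ mdeg s t Finset.univ r' := by
    unfold mdeg
    have h1 : e0 ∉ (medges s t C).filter (fun e => s e = r' ∨ t e = r') := fun h =>
      Finset.disjoint_left.1 dCN (Finset.mem_filter.1 h).1 he0N
    rw [← Finset.card_insert_of_notMem h1]
    apply Finset.card_le_card
    intro e he
    rcases Finset.mem_insert.1 he with h | h
    · rw [h]; simpa using hr'e
    · simpa using (Finset.mem_filter.1 h).2
  have hcardS : S.card = C.card + S'.card := by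
    rw [hS', Finset.card_sdiff_of_subset hCS]
    have := Finset.card_le_card hCS; omega
  have hCpos := Finset.card_pos.2 hCne
  have hS'pos := Finset.card_pos.2 ⟨r, hrS'⟩
  have hdr' := hd r'
  obtain ⟨RC, hRC, hRCQ, hRCc, hRCn⟩ := ih C.card (by omega) C r' rfl hr'C hCconn
    (by intro h; omega)
  obtain ⟨RS, hRS, hRSQ, hRSc, hRSn⟩ := ih S'.card (by omega) S' r rfl hrS' hS'conn
    (by intro h; apply hrQ; omega)
  let N' : Finset E := if 2 ≤ N.card then N else ∅
  have hN' : N' ⊆ N := by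
    simp only [N']; split_ifs
    · exact Finset.Subset.refl _
    · simp
  have hRcard : (RC ∪ (RS ∪ N')).card = RC.card + (RS.card + N'.card) := by
    rw [Finset.card_union_of_disjoint, Finset.card_union_of_disjoint]
    · exact Finset.disjoint_of_subset_left hRS (Finset.disjoint_of_subset_right hN' dSN)
    · exact Finset.disjoint_union_right.2 ⟨Finset.disjoint_of_subset_left hRC
        (Finset.disjoint_of_subset_right hRS dCS),
        Finset.disjoint_of_subset_left hRC (Finset.disjoint_of_subset_right hN' dCN)⟩
  refine ⟨RC ∪ (RS ∪ N'), ?_, ?_, ?_, ?_⟩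
  · rw [hEq]
    exact Finset.union_subset_union hRC (Finset.union_subset_union hRS hN')
  · intro e he
    rcases Finset.mem_union.1 he with h | h
    · exact hRCQ e h
    rcases Finset.mem_union.1 h with h | h
    · exact hRSQ e h
    have h2 : 2 ≤ N.card := by
      by_contra h2
      simp [N', h2] at h
    have hQ := hrQ (by omega)
    have := hN' h
    simp only [N, Finset.mem_filter, Finset.mem_univ, true_and] at this
    rcases this with h | h
    · left; rw [h.1]; exact hQ
    · right; rw [h.1]; exact hQ
  · intro J hJ
    have cC := hRCc J hJ
    have cS := hRSc J hJ
    -- an N edge survives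
    have hNs : ∃ e ∈ N, e ∈ Finset.univ \ (J ∩ (RC ∪ (RS ∪ N'))) := by
      have hout : ∀ e ∈ N, e ∈ RC ∪ (RS ∪ N') → e ∈ N' := by
        intro e he h
        rcases Finset.mem_union.1 h with h | h
        · exact absurd he (Finset.disjoint_left.1 dCN (hRC h))
        rcases Finset.mem_union.1 h with h | h
        · exact absurd he (Finset.disjoint_left.1 dSN (hRS h))
        · exact h
      by_cases h2 : 2 ≤ N.card
      · have hQ := hrQ (by omega)
        have hJr := hJ r hQ
        have : ¬ N ⊆ J := by
          intro hNJ
          have : N.card ≤ mdeg s t J r := by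
            apply Finset.card_le_card
            intro e he
            refine Finset.mem_filter.2 ⟨hNJ he, ?_⟩
            simp only [N, Finset.mem_filter, Finset.mem_univ, true_and] at he
            tauto
          omega
        obtain ⟨e, he, heJ⟩ := Finset.not_subset.1 this
        exact ⟨e, he, by simp [heJ]⟩
      · refine ⟨e0, he0N, ?_⟩
        simp only [Finset.mem_sdiff, Finset.mem_univ, true_and, Finset.mem_inter, not_and]
        intro _ h
        have := hout e0 he0N h
        simp [N', h2] at this
    have liftC : ∀ e ∈ medges s t C, e ∈ Finset.univ \ (J ∩ RC) →
        e ∈ Finset.univ \ (J ∩ (RC ∪ (RS ∪ N'))) := by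
      intro e he h
      simp only [Finset.mem_sdiff, Finset.mem_univ, true_and, Finset.mem_inter, not_and,
        Finset.mem_union] at h ⊢
      rintro hJ (h' | h' | h')
      · exact h hJ h'
      · exact Finset.disjoint_left.1 dCS he (hRS h')
      · exact Finset.disjoint_left.1 dCN he (hN' h')
    have liftS : ∀ e ∈ medges s t S', e ∈ Finset.univ \ (J ∩ RS) →
        e ∈ Finset.univ \ (J ∩ (RC ∪ (RS ∪ N'))) := by
      intro e he h
      simp only [Finset.mem_sdiff, Finset.mem_univ, true_and, Finset.mem_inter, not_and,
        Finset.mem_union] at h ⊢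
      rintro hJ (h' | h' | h')
      · exact Finset.disjoint_left.1 dCS (hRC h') he
      · exact h hJ h'
      · exact Finset.disjoint_left.1 dSN he (hN' h')
    -- general: handle any subset meeting / missing C
    have gen : ∀ (A : Finset V), A ⊆ S → ∀ (B : Finset E), mconn s t B A →
        (∀ e ∈ medges s t A, e ∈ B → e ∈ Finset.univ \ (J ∩ (RC ∪ (RS ∪ N')))) →
        ∀ X : Finset V, X ⊆ S → (X ∩ A).Nonempty → ¬ A ⊆ X →
        ∃ e ∈ Finset.univ \ (J ∩ (RC ∪ (RS ∪ N'))),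
          (s e ∈ X ∧ t e ∈ S ∧ t e ∉ X) ∨ (t e ∈ X ∧ s e ∈ S ∧ s e ∉ X) := by
      intro A hA B hB hl X hX hne hsub
      obtain ⟨e, heB, he⟩ := hB (X ∩ A) Finset.inter_subset_right hne
        (fun h => hsub (Finset.inter_eq_right.1 h))
      refine ⟨e, hl e ?_ heB, ?_⟩
      · simp only [medges, Finset.mem_filter, Finset.mem_univ, true_and]
        rcases he with ⟨h1, h2, -⟩ | ⟨h1, h2, -⟩
        · exact ⟨(Finset.mem_inter.1 h1).2, h2⟩
        · exact ⟨h2, (Finset.mem_inter.1 h1).2⟩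
      · rcases he with ⟨h1, h2, h3⟩ | ⟨h1, h2, h3⟩
        · exact Or.inl ⟨(Finset.mem_inter.1 h1).1, hA h2, fun h => h3 (Finset.mem_inter.2 ⟨h, h2⟩)⟩
        · exact Or.inr ⟨(Finset.mem_inter.1 h1).1, hA h2, fun h => h3 (Finset.mem_inter.2 ⟨h, h2⟩)⟩
    intro X hX hXne hXS
    by_cases c1 : (X ∩ C).Nonempty ∧ ¬ C ⊆ X
    · exact gen C hCS _ cC liftC X hX c1.1 c1.2
    by_cases c2 : (X ∩ S').Nonempty ∧ ¬ S' ⊆ X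
    · exact gen S' Finset.sdiff_subset _ cS liftS X hX c2.1 c2.2
    obtain ⟨e, heN, heA⟩ := hNs
    refine ⟨e, heA, ?_⟩
    simp only [N, Finset.mem_filter, Finset.mem_univ, true_and] at heN
    have unionS : ∀ v ∈ S, v ∈ C ∨ v ∈ S' := by
      intro v hv; by_cases h : v ∈ C
      · exact Or.inl h
      · exact Or.inr (Finset.mem_sdiff.2 ⟨hv, h⟩)
    by_cases hXC : C ⊆ X
    · have : ¬ S' ⊆ X := by
        intro h; apply hXS; apply Finset.Subset.antisymm hX
        intro v hv; rcases unionS v hv with h' | h'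
        · exact hXC h'
        · exact h h'
      have hno : ¬ (X ∩ S').Nonempty := fun h => c2 ⟨h, this⟩
      have hrX : r ∉ X := fun h => hno ⟨r, Finset.mem_inter.2 ⟨h, hrS'⟩⟩
      rcases heN with ⟨h1, h2⟩ | ⟨h1, h2⟩
      · exact Or.inr ⟨hXC h2, h1 ▸ hr, h1 ▸ hrX⟩
      · exact Or.inl ⟨hXC h2, h1 ▸ hr, h1 ▸ hrX⟩
    · have hno : ¬ (X ∩ C).Nonempty := fun h => c1 ⟨h, hXC⟩
      have hX' : (X ∩ S').Nonempty := by
        obtain ⟨v, hv⟩ := hXne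
        rcases unionS v (hX hv) with h' | h'
        · exact absurd ⟨v, Finset.mem_inter.2 ⟨hv, h'⟩⟩ hno
        · exact ⟨v, Finset.mem_inter.2 ⟨hv, h'⟩⟩
      have hS'X : S' ⊆ X := by by_contra h; exact c2 ⟨hX', h⟩
      have hCX : ∀ v ∈ C, v ∉ X := fun v hv h => hno ⟨v, Finset.mem_inter.2 ⟨h, hv⟩⟩
      rcases heN with ⟨h1, h2⟩ | ⟨h1, h2⟩
      · exact Or.inl ⟨h1 ▸ hS'X hrS', hCS h2, hCX _ h2⟩
      · exact Or.inr ⟨h1 ▸ hS'X hrS', hCS h2, hCX _ h2⟩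
  · rw [hRcard]
    by_cases h2 : 2 ≤ N.card
    · have : N'.card = N.card := by simp [N', h2]
      omega
    · have : N'.card = 0 := by simp [N', h2]
      omega

end Removable

set_option linter.unusedSectionVars false
set_option linter.unusedSimpArgs false
set_option linter.unusedVariables false
open SimpleGraph

/-! ### Part 3: Euler tours -/
section Euler
open Classical
variable {V E : Type*} [Fintype V] [Fintype E]

/-- A walk of `G` from `x` to `y` accounted for by the edge set `U` of the multigraph. -/
def MTrail (G : SimpleGraph V) (s t : E → V) (x y : V) (U : Finset E) : Prop :=
  ∃ w : G.Walk x y, w.length = U.card ∧ mbd s t U = Pi.single x 1 + Pi.single y 1 ∧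
    ∀ e ∈ U, s e ∈ w.support ∧ t e ∈ w.support

theorem minc_adj (G : SimpleGraph V) (s t : E → V) (hadj : ∀ e, G.Adj (s e) (t e)) (z : V) (e : E)
    (h : minc s t z e) : ∃ z', G.Adj z z' ∧
      (Pi.single (s e) 1 + Pi.single (t e) 1 : V → ZMod 2) = Pi.single z 1 + Pi.single z' 1 ∧
      (s e = z ∧ t e = z' ∨ s e = z' ∧ t e = z) := by
  rcases h.2 with h | h
  · refine ⟨t e, h ▸ hadj e, by rw [h], Or.inl ⟨h, rfl⟩⟩
  · refine ⟨s e, h ▸ (hadj e).symm, by rw [h, add_comm], Or.inr ⟨rfl, h⟩⟩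

theorem euler_tour (G : SimpleGraph V) (s t : E → V) (hadj : ∀ e, G.Adj (s e) (t e))
    [Nonempty V] (h0 : mbd s t Finset.univ = 0) (hc : mconn s t Finset.univ Finset.univ) :
    ∃ (v : V) (w : G.Walk v v), (∀ u, u ∈ w.support) ∧ w.length ≤ Fintype.card E := by
  have hex : ∃ q : V × Finset E, MTrail G s t q.1 q.1 q.2 :=
    ⟨(Classical.arbitrary V, ∅), Walk.nil, by simp, by rw [mbd_empty, fun_two_add_self], by simp⟩
  obtain ⟨⟨v, U⟩, hq, hmax⟩ := Finset.exists_max_image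
    (Finset.univ.filter fun q : V × Finset E => MTrail G s t q.1 q.1 q.2) (fun q => q.2.card)
    (by obtain ⟨q, hq⟩ := hex; exact ⟨q, by simpa using hq⟩)
  obtain ⟨w, hlen, hbd, hsup⟩ : MTrail G s t v v U := by simpa using hq
  have hmax' : ∀ v' U', MTrail G s t v' v' U' → U'.card ≤ U.card := fun v' U' h =>
    hmax (v', U') (by simpa using h)
  refine ⟨v, w, ?_, by rw [hlen]; exact Finset.card_le_univ U⟩
  by_contra hno
  push Not at hno
  obtain ⟨u0, hu0⟩ := hno
  obtain ⟨e, -, he⟩ := hc (Finset.univ.filter (· ∈ w.support)) (Finset.subset_univ _)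
    ⟨v, by simp⟩ (fun h => hu0 (by have := Finset.mem_univ u0; rw [← h] at this; simpa using this))
  obtain ⟨x, y, hx, hy, hxy, hsing, hends⟩ : ∃ x y, x ∈ w.support ∧ y ∉ w.support ∧ G.Adj x y ∧
      (Pi.single (s e) 1 + Pi.single (t e) 1 : V → ZMod 2) = Pi.single x 1 + Pi.single y 1 ∧
      (s e = x ∧ t e = y ∨ s e = y ∧ t e = x) := by
    rcases he with ⟨h1, -, h2⟩ | ⟨h1, -, h2⟩
    · exact ⟨s e, t e, by simpa using h1, by simpa using h2, hadj e, rfl, Or.inl ⟨rfl, rfl⟩⟩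
    · exact ⟨t e, s e, by simpa using h1, by simpa using h2, (hadj e).symm, by rw [add_comm],
        Or.inr ⟨rfl, rfl⟩⟩
  have heU : e ∉ U := by
    intro h
    have := hsup e h
    rcases hends with ⟨h1, h2⟩ | ⟨h1, h2⟩
    · exact hy (h2 ▸ this.2)
    · exact hy (h1 ▸ this.1)
  obtain ⟨⟨z, Q⟩, hq2, hmax2⟩ := Finset.exists_max_image
    (Finset.univ.filter fun q : V × Finset E => MTrail G s t y q.1 q.2 ∧ Disjoint q.2 (insert e U))
    (fun q => q.2.card)
    ⟨(y, ∅), by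
      simp only [Finset.mem_filter, Finset.mem_univ, true_and]
      exact ⟨⟨Walk.nil, by simp, by rw [mbd_empty, fun_two_add_self], by simp⟩, by simp⟩⟩
  obtain ⟨⟨p, plen, pbd, psup⟩, hdis⟩ : MTrail G s t y z Q ∧ Disjoint Q (insert e U) := by
    simpa using hq2
  have hmax2' : ∀ z' Q', MTrail G s t y z' Q' → Disjoint Q' (insert e U) → Q'.card ≤ Q.card :=
    fun z' Q' h h' => hmax2 (z', Q') (by
      simp only [Finset.mem_filter, Finset.mem_univ, true_and]; exact ⟨h, h'⟩)
  have hbdB : mbd s t (Q ∪ insert e U) = Pi.single x 1 + Pi.single z 1 := by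
    have h1 : mbd s t (Q ∪ insert e U) = mbd s t Q + mbd s t (insert e U) := by
      unfold mbd; rw [Finset.sum_union hdis]
    rw [h1, mbd_insert _ _ _ _ heU, pbd, hbd, fun_two_add_self, add_zero, hsing]
    calc _ = (Pi.single x 1 + Pi.single z 1) + ((Pi.single y 1 + Pi.single y 1) : V → ZMod 2) := by
          abel
      _ = _ := by rw [fun_two_add_self, add_zero]
  by_cases hzx : z = x
  · subst hzx
    have hcl : MTrail G s t z z (Q ∪ insert e U) := by
      refine ⟨(w.rotate _ hx).append (Walk.cons hxy p), ?_, hbdB, ?_⟩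
      · rw [Finset.card_union_of_disjoint hdis, Finset.card_insert_of_notMem heU,
          Walk.length_append, Walk.length_cons, plen, Walk.length_rotate, hlen]
        omega
      · intro f hf
        have hw : ∀ a ∈ w.support, a ∈ ((w.rotate _ hx).append (Walk.cons hxy p)).support := by
          intro a ha
          rw [Walk.mem_support_append_iff]
          left
          exact (Walk.mem_support_rotate_iff w _ hx).2 ha
        have hp : ∀ a ∈ p.support, a ∈ ((w.rotate _ hx).append (Walk.cons hxy p)).support := by
          intro a ha
          rw [Walk.mem_support_append_iff]
          right
          rw [Walk.support_cons]; exact List.mem_cons_of_mem _ ha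
        rcases Finset.mem_union.1 hf with h | h
        · exact ⟨hp _ (psup f h).1, hp _ (psup f h).2⟩
        rcases Finset.mem_insert.1 h with h | h
        · subst h
          rcases hends with ⟨h1, h2⟩ | ⟨h1, h2⟩
          · rw [h1, h2]; exact ⟨hw _ hx, hp _ p.start_mem_support⟩
          · rw [h1, h2]; exact ⟨hp _ p.start_mem_support, hw _ hx⟩
        · exact ⟨hw _ (hsup f h).1, hw _ (hsup f h).2⟩
    have := hmax' _ _ hcl
    rw [Finset.card_union_of_disjoint hdis, Finset.card_insert_of_notMem heU] at this
    omega
  · -- extend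
    have hrest : mbd s t (Finset.univ \ (Q ∪ insert e U)) = Pi.single x 1 + Pi.single z 1 := by
      have h1 : mbd s t (Finset.univ \ (Q ∪ insert e U)) + mbd s t (Q ∪ insert e U) = 0 := by
        rw [← h0]; unfold mbd
        exact Finset.sum_sdiff (Finset.subset_univ _)
      rw [hbdB] at h1
      calc _ = mbd s t (Finset.univ \ (Q ∪ insert e U)) + (Pi.single x 1 + Pi.single z 1)
            + (Pi.single x 1 + Pi.single z 1) := by rw [add_assoc, fun_two_add_self, add_zero]
        _ = _ := by rw [h1, zero_add]
    have hz1 := mbd_apply s t (Finset.univ \ (Q ∪ insert e U)) z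
    rw [hrest] at hz1
    have hzx' : x ≠ z := fun h => hzx h.symm
    have hne : (Finset.univ \ (Q ∪ insert e U)).filter (minc s t z) ≠ ∅ := by
      intro h
      rw [h] at hz1
      simp [Pi.single_apply, hzx] at hz1
    obtain ⟨f, hf⟩ := Finset.nonempty_iff_ne_empty.2 hne
    rw [Finset.mem_filter, Finset.mem_sdiff, Finset.mem_union] at hf
    obtain ⟨⟨-, hf1⟩, hf2⟩ := hf
    push Not at hf1
    obtain ⟨z', hzz, hs, hen⟩ := minc_adj G s t hadj z f hf2
    have := hmax2' z' (insert f Q) ?_ ?_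
    · rw [Finset.card_insert_of_notMem hf1.1] at this; omega
    · refine ⟨p.concat hzz, ?_, ?_, ?_⟩
      · rw [Walk.length_concat, plen, Finset.card_insert_of_notMem hf1.1]
      · rw [mbd_insert _ _ _ _ hf1.1, pbd, hs]
        calc _ = (Pi.single y 1 + Pi.single z' 1) + ((Pi.single z 1 + Pi.single z 1) : V → ZMod 2) := by
              abel
          _ = _ := by rw [fun_two_add_self, add_zero]
      · intro g hg
        rw [Walk.support_concat]
        simp only [List.concat_eq_append, List.mem_append, List.mem_singleton]
        rcases Finset.mem_insert.1 hg with h | h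
        · subst h
          rcases hen with ⟨h1, h2⟩ | ⟨h1, h2⟩
          · rw [h1, h2]; exact ⟨Or.inl p.end_mem_support, Or.inr rfl⟩
          · rw [h1, h2]; exact ⟨Or.inr rfl, Or.inl p.end_mem_support⟩
        · exact ⟨Or.inl (psup g h).1, Or.inl (psup g h).2⟩
    · rw [Finset.disjoint_insert_left]; exact ⟨hf1.2, hdis⟩

end Euler

set_option linter.unusedSectionVars false
set_option linter.unusedSimpArgs false
set_option linter.unusedVariables false
open SimpleGraph

/-! ### Part 4: the subcubic 2-edge-connected core -/
section Core
open Classical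
variable {V E : Type*} [Fintype V] [Fintype E]

theorem mbd_eq_mdeg (s t : E → V) (hl : ∀ e, s e ≠ t e) (F : Finset E) (v : V) :
    mbd s t F v = (mdeg s t F v : ZMod 2) := by
  rw [mbd_apply, mdeg]
  congr 2
  ext e
  simp only [Finset.mem_filter, minc]
  have := hl e
  tauto

theorem sum_mdeg_filter (s t : E → V) (hl : ∀ e, s e ≠ t e) (F : Finset E) (P : V → Prop) :
    ∑ v ∈ Finset.univ.filter P, mdeg s t F v =
      ∑ e ∈ F, ((if P (s e) then 1 else 0) + if P (t e) then 1 else 0) := by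
  unfold mdeg
  simp only [Finset.card_filter]
  rw [Finset.sum_comm]
  apply Finset.sum_congr rfl
  intro e _
  have h1 : ∀ v, (if s e = v ∨ t e = v then 1 else 0) =
      (if s e = v then 1 else 0) + (if t e = v then (1 : ℕ) else 0) := by
    intro v
    by_cases h1 : s e = v <;> by_cases h2 : t e = v
    · exact absurd (h1.trans h2.symm) (hl e)
    all_goals simp [h1, h2]
  simp only [h1, Finset.sum_add_distrib, Finset.sum_ite_eq, Finset.mem_filter, Finset.mem_univ,
    true_and]

theorem sum_mdeg (s t : E → V) (hl : ∀ e, s e ≠ t e) (F : Finset E) :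
    ∑ v, mdeg s t F v = 2 * F.card := by
  have := sum_mdeg_filter s t hl F (fun _ => True)
  simp only [Finset.filter_true, if_true, Finset.sum_const] at this
  rw [this]; simp; ring

theorem sum_mbd_cut (s t : E → V) (F : Finset E) (X : Finset V) :
    ∑ v ∈ X, mbd s t F v = ((F.filter fun e => ¬ (s e ∈ X ↔ t e ∈ X)).card : ZMod 2) := by
  unfold mbd
  simp only [Finset.sum_apply, Pi.add_apply]
  rw [Finset.sum_comm, Finset.card_filter, Nat.cast_sum]
  apply Finset.sum_congr rfl
  intro e he
  rw [Finset.sum_add_distrib]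
  simp only [Pi.single_apply, Finset.sum_ite_eq', Finset.sum_ite_eq]
  have h11 : (1 : ZMod 2) + 1 = 0 := by decide
  by_cases h1 : s e ∈ X <;> by_cases h2 : t e ∈ X <;> simp [h1, h2, h11]

theorem core_subcubic (G : SimpleGraph V) (s t : E → V) (hadj : ∀ e, G.Adj (s e) (t e))
    (hn : 2 ≤ Fintype.card V)
    (h2 : ∀ X : Finset V, X.Nonempty → X ≠ Finset.univ →
      2 ≤ (Finset.univ.filter fun e => ¬ (s e ∈ X ↔ t e ∈ X)).card)
    (hd : ∀ v, mdeg s t Finset.univ v ≤ 3) :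
    ∃ (v : V) (w : G.Walk v v), (∀ u, u ∈ w.support) ∧ 3 * w.length ≤ 4 * Fintype.card V := by
  have hl : ∀ e, s e ≠ t e := fun e => (hadj e).ne
  have : Nonempty V := Fintype.card_pos_iff.1 (by omega)
  have hd2 : ∀ v, 2 ≤ mdeg s t Finset.univ v := by
    intro v
    refine le_trans (h2 {v} (by simp) ?_) (Finset.card_le_card ?_)
    · intro h
      have := congrArg Finset.card h
      rw [Finset.card_singleton, Finset.card_univ] at this
      omega
    · intro e he
      simp only [Finset.mem_filter, Finset.mem_univ, true_and, Finset.mem_singleton] at he ⊢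
      tauto
  have hconn : mconn s t Finset.univ Finset.univ := by
    intro X _ hX hX2
    have := h2 X hX hX2
    obtain ⟨e, he⟩ := Finset.card_pos.1 (by omega :
      0 < (Finset.univ.filter fun e => ¬ (s e ∈ X ↔ t e ∈ X)).card)
    refine ⟨e, Finset.mem_univ e, ?_⟩
    simp only [Finset.mem_filter, Finset.mem_univ, true_and] at he ⊢
    tauto
  by_cases hT : ∃ r, mdeg s t Finset.univ r = 3
  swap
  · have hdeg : ∀ v, mdeg s t Finset.univ v = 2 := by
      intro v; have := hd v; have := hd2 v
      have : mdeg s t Finset.univ v ≠ 3 := fun h => hT ⟨v, h⟩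
      omega
    obtain ⟨v, w, h1, hle⟩ := euler_tour G s t hadj (by
      funext v; rw [mbd_eq_mdeg s t hl, hdeg]; rfl) hconn
    refine ⟨v, w, h1, ?_⟩
    have := sum_mdeg s t hl Finset.univ
    simp only [hdeg, Finset.sum_const, smul_eq_mul, Finset.card_univ] at this
    omega
  obtain ⟨r, hr⟩ := hT
  have hmu : medges s t Finset.univ = Finset.univ := by simp [medges]
  obtain ⟨R, -, hRQ, hRc, hRn⟩ := exists_removable s t hl hd _ Finset.univ r rfl (Finset.mem_univ r)
    hconn (fun _ => hr)
  rw [hmu, hr, Finset.card_univ, Finset.card_univ] at hRn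
  let Tt : Finset V := Finset.univ.filter fun v => mdeg s t Finset.univ v = 3
  let a : E → ℕ := fun e => (if mdeg s t Finset.univ (s e) = 3 then 1 else 0) +
    if mdeg s t Finset.univ (t e) = 3 then 1 else 0
  have ha : ∀ F : Finset E, ∑ v ∈ Tt, mdeg s t F v = ∑ e ∈ F, a e := by
    intro F
    have := sum_mdeg_filter s t hl F (fun v => mdeg s t Finset.univ v = 3)
    convert this
  let sg : E → ℝ := fun e => if e ∈ R then -1 else 1
  let K : ℝ := 4 * Fintype.card E + 1
  have hsg : ∀ F : Finset E, ∑ e ∈ F, sg e = (F \ R).card - (F ∩ R).card := by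
    intro F
    rw [← Finset.sum_inter_add_sum_sdiff F R]
    have e1 : ∑ e ∈ F ∩ R, sg e = ∑ e ∈ F ∩ R, (-1 : ℝ) := Finset.sum_congr rfl (fun e he => by
      simp only [sg, if_pos (Finset.mem_inter.1 he).2])
    have e2 : ∑ e ∈ F \ R, sg e = ∑ e ∈ F \ R, (1 : ℝ) := Finset.sum_congr rfl (fun e he => by
      simp only [sg, if_neg (Finset.mem_sdiff.1 he).2])
    rw [e1, e2]; simp; ring
  obtain ⟨J, hJ, hJw⟩ := exists_light_tjoin s t (fun e => K * a e + sg e) (mbd s t Finset.univ)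
    (by
      intro e
      have hK : (1 : ℝ) ≤ K := by simp only [K]; have : (0 : ℝ) ≤ Fintype.card E := by positivity
                                  linarith
      by_cases he : e ∈ R
      · have h1 : 1 ≤ a e := by
          simp only [a]
          rcases hRQ e he with h | h <;> simp [h]
        have h1' : (1 : ℝ) ≤ a e := by exact_mod_cast h1
        simp only [sg, if_pos he]
        nlinarith
      · simp only [sg, if_neg he]
        positivity)
    ⟨Finset.univ, rfl⟩
    (by
      intro X hX
      rw [sum_mbd_cut] at hX
      have hXne : X.Nonempty := by
        rw [Finset.nonempty_iff_ne_empty]; rintro rfl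
        simp at hX
      have hXu : X ≠ Finset.univ := by
        rintro rfl; simp at hX
      have := h2 X hXne hXu
      rcases Nat.lt_or_ge 2 (Finset.univ.filter fun e => ¬ (s e ∈ X ↔ t e ∈ X)).card with h | h
      · exact h
      · have h3 : (Finset.univ.filter fun e => ¬ (s e ∈ X ↔ t e ∈ X)).card = 2 := by omega
        rw [h3] at hX
        exact absurd hX (by decide))
  rw [Finset.sum_add_distrib, Finset.sum_add_distrib, ← Finset.mul_sum, ← Finset.mul_sum, hsg, hsg,
    ← Nat.cast_sum, ← Nat.cast_sum, ← ha, ← ha] at hJw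
  have hTE : ∑ v ∈ Tt, mdeg s t Finset.univ v = 3 * Tt.card := by
    rw [Finset.sum_congr rfl (g := fun _ => 3) (fun v hv => (Finset.mem_filter.1 hv).2)]
    simp; ring
  have hJ1 : ∀ v ∈ Tt, 1 ≤ mdeg s t J v := by
    intro v hv
    by_contra h
    have h0 : mdeg s t J v = 0 := by omega
    have := congrFun hJ v
    rw [mbd_eq_mdeg s t hl, mbd_eq_mdeg s t hl, h0, (Finset.mem_filter.1 hv).2] at this
    exact absurd this (by decide)
  have hJT : Tt.card ≤ ∑ v ∈ Tt, mdeg s t J v := by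
    calc Tt.card = ∑ v ∈ Tt, 1 := by simp
      _ ≤ _ := Finset.sum_le_sum hJ1
  have cardJ := Finset.card_sdiff_add_card_inter J R
  have hJle : (J : Finset E).card ≤ Fintype.card E := Finset.card_le_univ J
  have cardR : (Finset.univ \ R).card + R.card = Fintype.card E := by
    rw [← Finset.card_univ, Finset.card_sdiff_add_card_eq_card (Finset.subset_univ R)]
  rw [hTE, Finset.univ_inter] at hJw
  have hJeq : ∑ v ∈ Tt, mdeg s t J v = Tt.card := by
    by_contra hne
    have h1 : Tt.card + 1 ≤ ∑ v ∈ Tt, mdeg s t J v := by omega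
    have h1' : (Tt.card : ℝ) + 1 ≤ (∑ v ∈ Tt, mdeg s t J v : ℕ) := by exact_mod_cast h1
    have hKp : 0 ≤ K := by simp only [K]; positivity
    have h2 := mul_le_mul_of_nonneg_left h1' hKp
    have c1 : ((J \ R).card : ℝ) + (J ∩ R).card = J.card := by exact_mod_cast cardJ
    have c2 : (J.card : ℝ) ≤ Fintype.card E := by exact_mod_cast hJle
    have c3 : ((Finset.univ \ R).card : ℝ) + R.card = Fintype.card E := by exact_mod_cast cardR
    have p1 : (0 : ℝ) ≤ (J \ R).card := by positivity
    have p2 : (0 : ℝ) ≤ R.card := by positivity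
    push_cast at hJw h2
    have : K * 1 = 4 * Fintype.card E + 1 := by simp [K]
    nlinarith
  have hJone : ∀ v, mdeg s t Finset.univ v = 3 → mdeg s t J v ≤ 1 := by
    intro v hv
    have hvT : v ∈ Tt := by simpa [Tt] using hv
    have h1 : ∑ v ∈ Tt, 1 = ∑ v ∈ Tt, mdeg s t J v := by rw [hJeq]; simp
    have := (Finset.sum_eq_sum_iff_of_le hJ1).1 h1 v hvT
    omega
  have hcJ := hRc J hJone
  rw [hJeq] at hJw
  have hs : 3 * ((J \ R).card : ℝ) - 3 * (J ∩ R).card ≤ (Finset.univ \ R).card - R.card := by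
    push_cast at hJw; nlinarith
  have hs' : 3 * (J \ R).card + R.card ≤ (Finset.univ \ R).card + 3 * (J ∩ R).card := by
    have : 3 * ((J \ R).card : ℝ) + R.card ≤ (Finset.univ \ R).card + 3 * (J ∩ R).card := by
      linarith
    exact_mod_cast this
  -- the final multigraph
  let A : Finset E := Finset.univ \ (J ∩ R)
  let B : Finset E := J \ R
  let s' : A ⊕ B → V := Sum.elim (fun e => s e.1) (fun e => s e.1)
  let t' : A ⊕ B → V := Sum.elim (fun e => t e.1) (fun e => t e.1)
  have hcardA : A.card + (J ∩ R).card = Fintype.card E := by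
    rw [← Finset.card_univ, Finset.card_sdiff_add_card_eq_card (Finset.subset_univ _)]
  obtain ⟨v, w, hw1, hw2⟩ := euler_tour G s' t' (by rintro (e | e) <;> exact hadj e.1)
    (by
      have e1 : mbd s' t' Finset.univ = mbd s t A + mbd s t B := by
        unfold mbd
        rw [Fintype.sum_sum_type]
        congr 1
        · exact Finset.sum_coe_sort A (fun e => (Pi.single (s e) 1 + Pi.single (t e) 1 : V → ZMod 2))
        · exact Finset.sum_coe_sort B (fun e => (Pi.single (s e) 1 + Pi.single (t e) 1 : V → ZMod 2))
      have e2 : mbd s t A + mbd s t (J ∩ R) = mbd s t Finset.univ := by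
        unfold mbd; exact Finset.sum_sdiff (Finset.subset_univ _)
      have e3 : mbd s t (J ∩ R) + mbd s t B = mbd s t J := by
        unfold mbd; exact Finset.sum_inter_add_sum_sdiff J R _
      rw [e1]
      calc mbd s t A + mbd s t B = mbd s t A + mbd s t B + (mbd s t (J ∩ R) + mbd s t (J ∩ R)) := by
            rw [fun_two_add_self, add_zero]
        _ = (mbd s t A + mbd s t (J ∩ R)) + (mbd s t (J ∩ R) + mbd s t B) := by abel
        _ = 0 := by rw [e2, e3, hJ, fun_two_add_self])
    (by
      intro X hX hX1 hX2
      obtain ⟨e, he, h⟩ := hcJ X hX hX1 hX2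
      exact ⟨Sum.inl ⟨e, he⟩, Finset.mem_univ _, h⟩)
  refine ⟨v, w, hw1, ?_⟩
  rw [Fintype.card_sum, Fintype.card_coe, Fintype.card_coe] at hw2
  have : B.card = (J \ R).card := rfl
  omega

end Core

set_option linter.unusedSectionVars false
set_option linter.unusedSimpArgs false
set_option linter.unusedVariables false
open SimpleGraph

/-! ### Part 5: multisets of edges and splitting off -/
section Split
open Classical
variable {V : Type*}

/-- `e` joins `P` and `Q`. -/
def btw (P Q : Set V) (e : Sym2 V) : Prop := ∃ a b, e = s(a, b) ∧ a ∈ P ∧ b ∈ Q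

theorem btw_mk (P Q : Set V) (y z : V) :
    btw P Q s(y, z) ↔ (y ∈ P ∧ z ∈ Q) ∨ (z ∈ P ∧ y ∈ Q) := by
  constructor
  · rintro ⟨a, b, h, h1, h2⟩
    rw [Sym2.eq_iff] at h
    rcases h with ⟨rfl, rfl⟩ | ⟨rfl, rfl⟩
    · exact Or.inl ⟨h1, h2⟩
    · exact Or.inr ⟨h1, h2⟩
  · rintro (⟨h1, h2⟩ | ⟨h1, h2⟩)
    · exact ⟨y, z, rfl, h1, h2⟩
    · exact ⟨z, y, Sym2.eq_swap, h1, h2⟩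

/-- Number of edges of `M` joining `P` and `Q`. -/
noncomputable def nb (M : Multiset (Sym2 V)) (P Q : Set V) : ℕ := M.countP (btw P Q)
/-- Number of edges of `M` leaving `Z`. -/
noncomputable def md (M : Multiset (Sym2 V)) (Z : Set V) : ℕ := M.countP (btw Z Zᶜ)
/-- Degree of `x` in `M`. -/
noncomputable def mdg (M : Multiset (Sym2 V)) (x : V) : ℕ := M.countP (x ∈ ·)

theorem md_add (M N : Multiset (Sym2 V)) (Z : Set V) : md (M + N) Z = md M Z + md N Z :=
  Multiset.countP_add _ _ _
theorem mdg_add (M N : Multiset (Sym2 V)) (x : V) : mdg (M + N) x = mdg M x + mdg N x :=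
  Multiset.countP_add _ _ _
theorem md_single (y z : V) (Z : Set V) : md {s(y, z)} Z = if (y ∈ Z ↔ z ∈ Z) then 0 else 1 := by
  unfold md
  rw [← Multiset.cons_zero, Multiset.countP_cons, btw_mk]
  by_cases h1 : y ∈ Z <;> by_cases h2 : z ∈ Z <;> simp [h1, h2]
theorem mdg_single (y z x : V) : mdg {s(y, z)} x = if x = y ∨ x = z then 1 else 0 := by
  unfold mdg
  rw [← Multiset.cons_zero, Multiset.countP_cons]
  simp
theorem mdg_eq_zero (M : Multiset (Sym2 V)) (x : V) (h : ∀ e ∈ M, x ∉ e) : mdg M x = 0 :=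
  Multiset.countP_eq_zero.2 h
theorem md_compl (M : Multiset (Sym2 V)) (Z : Set V) : md M Zᶜ = md M Z := by
  unfold md
  apply Multiset.countP_congr rfl
  intro e _
  induction e using Sym2.ind with
  | _ y z => rw [btw_mk, btw_mk]; simp only [Set.mem_compl_iff, not_not, eq_iff_iff]; tauto
theorem md_cons (y z : V) (M : Multiset (Sym2 V)) (Z : Set V) :
    md (s(y, z) ::ₘ M) Z = (if (y ∈ Z ↔ z ∈ Z) then 0 else 1) + md M Z := by
  rw [← Multiset.singleton_add, md_add, md_single]
theorem mdg_cons (y z : V) (M : Multiset (Sym2 V)) (x : V) :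
    mdg (s(y, z) ::ₘ M) x = (if x = y ∨ x = z then 1 else 0) + mdg M x := by
  rw [← Multiset.singleton_add, mdg_add, mdg_single]
theorem nb_cons (y z : V) (M : Multiset (Sym2 V)) (P Q : Set V) :
    nb (s(y, z) ::ₘ M) P Q = nb M P Q + (if (y ∈ P ∧ z ∈ Q) ∨ (z ∈ P ∧ y ∈ Q) then 1 else 0) := by
  unfold nb
  rw [Multiset.countP_cons]
  simp only [btw_mk]

/-- Every cut separating two vertices of `W` has at least two edges. -/
def TwoEC (W : Finset V) (M : Multiset (Sym2 V)) : Prop :=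
  ∀ Z : Set V, (∃ x ∈ W, x ∈ Z) → (∃ y ∈ W, y ∉ Z) → 2 ≤ md M Z

theorem region_count (M : Multiset (Sym2 V)) (u : V) (hu : ∀ e ∈ M, u ∉ e) (X Y : Set V) :
    let A := X ∩ Y; let B := X \ Y; let C := Y \ X; let D := ({u}ᶜ \ X) \ Y
    u ∉ X → u ∉ Y →
    md M X = nb M A C + nb M A D + nb M B C + nb M B D ∧
    md M Y = nb M A B + nb M A D + nb M B C + nb M C D ∧
    md M A = nb M A B + nb M A C + nb M A D ∧
    md M B = nb M A B + nb M B C + nb M B D ∧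
    md M C = nb M A C + nb M B C + nb M C D ∧
    md M D = nb M A D + nb M B D + nb M C D := by
  intro A B C D huX huY
  induction M using Multiset.induction_on with
  | empty => simp [md, nb]
  | cons e M ih =>
    have ih' := ih (fun e he => hu e (Multiset.mem_cons_of_mem he))
    have hue := hu e (Multiset.mem_cons_self e M)
    clear ih hu
    induction e using Sym2.ind with
    | _ y z =>
    rw [Sym2.mem_iff] at hue
    push Not at hue
    obtain ⟨hy, hz⟩ := hue
    obtain ⟨i1, i2, i3, i4, i5, i6⟩ := ih'
    simp only [md_cons, nb_cons, i1, i2, i3, i4, i5, i6]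
    simp only [A, B, C, D, Set.mem_inter_iff, Set.mem_sdiff, Set.mem_compl_iff,
      Set.mem_singleton_iff, hy.symm, hz.symm, not_false_eq_true, true_and]
    by_cases h1 : y ∈ X <;> by_cases h2 : z ∈ X <;> by_cases h3 : y ∈ Y <;> by_cases h4 : z ∈ Y <;>
      simp only [h1, h2, h3, h4] <;> simp <;> omega

theorem split_fail (W : Finset V) (u a b c p : V) (M0 : Multiset (Sym2 V))
    (hu : ∀ e ∈ M0, u ∉ e) (huW : u ∈ W) (hcW : c ∈ W) (hpW : p ∈ W)
    (ha : a ≠ u) (hb : b ≠ u) (hc : c ≠ u) (hp : p ≠ u)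
    (h : TwoEC W ({s(u, a)} + {s(u, b)} + {s(u, c)} + {s(u, p)} + M0))
    (hf : ¬ TwoEC W ({s(a, b)} + {s(u, c)} + {s(u, p)} + M0)) :
    ∃ X : Set V, u ∉ X ∧ a ∈ X ∧ b ∈ X ∧ c ∉ X ∧ p ∉ X ∧ md M0 X ≤ 1 := by
  have hf' : ∃ X : Set V, u ∉ X ∧ (∃ x ∈ W, x ∈ X) ∧
      md ({s(a, b)} + {s(u, c)} + {s(u, p)} + M0) X ≤ 1 := by
    unfold TwoEC at hf
    push Not at hf
    obtain ⟨Z, h1, h2, h3⟩ := hf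
    by_cases huZ : u ∈ Z
    · exact ⟨Zᶜ, by simpa using huZ, h2, by rw [md_compl]; omega⟩
    · exact ⟨Z, huZ, h1, by omega⟩
  obtain ⟨X, huX, hX, hle⟩ := hf'
  have h1 := h X hX ⟨u, huW, huX⟩
  have hcomp : (∃ x ∈ W, x ∈ ({u}ᶜ \ X : Set V)) →
    2 ≤ md ({s(u, a)} + {s(u, b)} + {s(u, c)} + {s(u, p)} + M0) ({u}ᶜ \ X) := fun hh =>
      h _ hh ⟨u, huW, by simp⟩
  have hd0 : md M0 ({u}ᶜ \ X) = md M0 X := by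
    unfold md
    apply Multiset.countP_congr rfl
    intro e he
    have hue := hu e he
    induction e using Sym2.ind with
    | _ y z =>
      rw [Sym2.mem_iff] at hue
      push Not at hue
      have h1 := hue.1.symm
      have h2 := hue.2.symm
      rw [btw_mk, btw_mk]
      simp only [Set.mem_compl_iff, Set.mem_sdiff, Set.mem_singleton_iff, h1, h2, eq_iff_iff]
      tauto
  have hc' : c ∉ X → 2 ≤ md ({s(u, a)} + {s(u, b)} + {s(u, c)} + {s(u, p)} + M0) ({u}ᶜ \ X) :=
    fun hh => hcomp ⟨c, hcW, by simp [hc, hh]⟩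
  have hp' : p ∉ X → 2 ≤ md ({s(u, a)} + {s(u, b)} + {s(u, c)} + {s(u, p)} + M0) ({u}ᶜ \ X) :=
    fun hh => hcomp ⟨p, hpW, by simp [hp, hh]⟩
  simp only [md_add, md_single, hd0, Set.mem_sdiff, Set.mem_compl_iff, Set.mem_singleton_iff, ha, hb,
    hc, hp, huX] at h1 hle hc' hp'
  refine ⟨X, huX, ?_⟩
  by_cases g1 : a ∈ X <;> by_cases g2 : b ∈ X <;> by_cases g3 : c ∈ X <;> by_cases g4 : p ∈ X <;>
    simp [g1, g2, g3, g4] at h1 hle hc' hp' ⊢ <;> omega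

theorem split_off (W : Finset V) (u a b c p : V) (M0 : Multiset (Sym2 V))
    (hu : ∀ e ∈ M0, u ∉ e) (huW : u ∈ W) (haW : a ∈ W) (hbW : b ∈ W) (hcW : c ∈ W) (hpW : p ∈ W)
    (ha : a ≠ u) (hb : b ≠ u) (hc : c ≠ u) (hp : p ≠ u)
    (h : TwoEC W ({s(u, a)} + {s(u, b)} + {s(u, c)} + {s(u, p)} + M0)) :
    TwoEC W ({s(a, b)} + {s(u, c)} + {s(u, p)} + M0) ∨
    TwoEC W ({s(a, c)} + {s(u, b)} + {s(u, p)} + M0) := by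
  by_contra hno
  push Not at hno
  obtain ⟨X, huX, aX, bX, cX, pX, hX⟩ := split_fail W u a b c p M0 hu huW hcW hpW ha hb hc hp h hno.1
  have h' : TwoEC W ({s(u, a)} + {s(u, c)} + {s(u, b)} + {s(u, p)} + M0) := by
    have e : ({s(u, a)} + {s(u, c)} + {s(u, b)} + {s(u, p)} + M0 : Multiset (Sym2 V)) =
      {s(u, a)} + {s(u, b)} + {s(u, c)} + {s(u, p)} + M0 := by abel
    rw [e]; exact h
  obtain ⟨Y, huY, aY, cY, bY, pY, hY⟩ := split_fail W u a c b p M0 hu huW hbW hpW ha hc hb hp h' hno.2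
  obtain ⟨i1, i2, i3, i4, i5, i6⟩ := region_count M0 u hu X Y huX huY
  have j1 := h (X ∩ Y) ⟨a, haW, aX, aY⟩ ⟨u, huW, by simp [huX]⟩
  have j2 := h (X \ Y) ⟨b, hbW, bX, bY⟩ ⟨u, huW, by simp [huX]⟩
  have j3 := h (Y \ X) ⟨c, hcW, cY, cX⟩ ⟨u, huW, by simp [huY]⟩
  have j4 := h (({u}ᶜ \ X) \ Y) ⟨p, hpW, by simp [hp, pX, pY]⟩ ⟨u, huW, by simp⟩
  simp only [md_add, md_single, Set.mem_sdiff, Set.mem_inter_iff, Set.mem_compl_iff,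
    Set.mem_singleton_iff, ha, hb, hc, hp, huX, huY, aX, bX, cX, pX, aY, bY, cY, pY] at j1 j2 j3 j4
  simp at j1 j2 j3 j4
  omega

end Split

set_option linter.unusedSectionVars false
set_option linter.unusedSimpArgs false
set_option linter.unusedVariables false
open SimpleGraph

/-! ### Part 6: ears -/
section Ears
open Classical
variable {V : Type*} {G : SimpleGraph V}

/-- The multiset of edges of a walk. -/
def wE {u v : V} (w : G.Walk u v) : Multiset (Sym2 V) := (w.edges : Multiset (Sym2 V))

theorem wE_cons {u v x : V} (h : G.Adj u v) (w : G.Walk v x) :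
    wE (Walk.cons h w) = s(u, v) ::ₘ wE w := by
  simp [wE]

theorem wE_append {u v x : V} (w : G.Walk u v) (w' : G.Walk v x) :
    wE (w.append w') = wE w + wE w' := by
  simp [wE, Walk.edges_append]

theorem wE_reverse {u v : V} (w : G.Walk u v) : wE w.reverse = wE w := by
  simp [wE, Walk.edges_reverse]

theorem wE_cross {u v : V} (w : G.Walk u v) (Z : Set V) (h : ¬ (u ∈ Z ↔ v ∈ Z)) :
    1 ≤ md (wE w) Z := by
  induction w with
  | nil => exact absurd Iff.rfl h
  | @cons a b c hab p ih =>
    rw [wE_cons, md_cons]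
    by_cases hb : (b ∈ Z ↔ c ∈ Z)
    · have : ¬ (a ∈ Z ↔ b ∈ Z) := fun h' => h (h'.trans hb)
      rw [if_neg this]; omega
    · have := ih hb; omega

theorem wE_cross_two {u v x : V} (w : G.Walk u v) (hx : x ∈ w.support) (Z : Set V)
    (h1 : ¬ (u ∈ Z ↔ x ∈ Z)) (h2 : ¬ (v ∈ Z ↔ x ∈ Z)) : 2 ≤ md (wE w) Z := by
  rw [← w.take_spec hx, wE_append, md_add]
  have e1 := wE_cross (w.takeUntil x hx) Z h1
  have e2 := wE_cross (w.dropUntil x hx) Z (fun h => h2 h.symm)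
  omega

theorem wE_mem_support {u v x : V} (w : G.Walk u v) (e : Sym2 V) (he : e ∈ wE w) (hx : x ∈ e) :
    x ∈ w.support := by
  induction e using Sym2.ind with
  | _ y z =>
    have he' : s(y, z) ∈ w.edges := by simpa [wE] using he
    rcases Sym2.mem_iff.1 hx with rfl | rfl
    · exact Walk.fst_mem_support_of_mem_edges w he'
    · exact Walk.snd_mem_support_of_mem_edges w he'

theorem mdg_wE_notMem {u v x : V} (w : G.Walk u v) (hx : x ∉ w.support) : mdg (wE w) x = 0 :=
  mdg_eq_zero _ _ fun e he hxe => hx (wE_mem_support w e he hxe)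

theorem mdg_wE_start {u v : V} (w : G.Walk u v) (hw : w.IsPath) : mdg (wE w) u ≤ 1 := by
  cases w with
  | nil => simp [wE, mdg]
  | cons h p =>
    rw [Walk.cons_isPath_iff] at hw
    rw [wE_cons, mdg_cons, mdg_wE_notMem p hw.2]
    split_ifs <;> omega

theorem mdg_wE_end {u v : V} (w : G.Walk u v) (hw : w.IsPath) : mdg (wE w) v ≤ 1 := by
  rw [← wE_reverse]; exact mdg_wE_start _ hw.reverse

theorem mdg_wE_le {u v : V} (w : G.Walk u v) (hw : w.IsPath) (x : V) : mdg (wE w) x ≤ 2 := by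
  by_cases hx : x ∈ w.support
  · rw [← w.take_spec hx, wE_append, mdg_add]
    have e1 := mdg_wE_end (w.takeUntil x hx) (hw.takeUntil hx)
    have e2 := mdg_wE_start (w.dropUntil x hx) (hw.dropUntil hx)
    omega
  · rw [mdg_wE_notMem w hx]; omega

/-- Edges of `M` are edges of `G` inside `W`, and cuts have size two. -/
def Good2 (G : SimpleGraph V) (W : Finset V) (M : Multiset (Sym2 V)) : Prop :=
  (∀ e ∈ M, e ∈ G.edgeSet) ∧ (∀ e ∈ M, ∀ x ∈ e, x ∈ W) ∧ TwoEC W M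

/-- `W` together with the vertices of a walk. -/
noncomputable def Wext (W : Finset V) {u v : V} (w : G.Walk u v) : Finset V := W ∪ w.support.toFinset

theorem mem_Wext (W : Finset V) {u v : V} (w : G.Walk u v) (x : V) :
    x ∈ Wext W w ↔ x ∈ W ∨ x ∈ w.support := by simp [Wext]

theorem mdg_zero_of_out (W : Finset V) (M : Multiset (Sym2 V)) (h : ∀ e ∈ M, ∀ x ∈ e, x ∈ W)
    (x : V) (hx : x ∉ W) : mdg M x = 0 :=
  mdg_eq_zero _ _ fun e he hxe => hx (h e he x hxe)

/-- Adding an ear, possibly in place of an edge joining its ends. -/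
theorem ear_two (W : Finset V) (M M' : Multiset (Sym2 V)) (hM : Good2 G W M) {u v : V}
    (w : G.Walk u v) (hu : u ∈ W) (hv : v ∈ W) (hM' : M' = M ∨ M = s(u, v) ::ₘ M') :
    Good2 G (Wext W w) (M' + wE w) := by
  obtain ⟨h1, h2, h3⟩ := hM
  have hsub : ∀ e ∈ M', e ∈ M := by
    intro e he
    rcases hM' with h | h
    · rw [← h]; exact he
    · rw [h]; exact Multiset.mem_cons_of_mem he
  refine ⟨?_, ?_, ?_⟩
  · intro e he
    rcases Multiset.mem_add.1 he with h | h
    · exact h1 e (hsub e h)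
    · exact w.edges_subset_edgeSet (by simpa [wE] using h)
  · intro e he x hx
    rw [mem_Wext]
    rcases Multiset.mem_add.1 he with h | h
    · exact Or.inl (h2 e (hsub e h) x hx)
    · exact Or.inr (wE_mem_support w e h hx)
  · intro Z hx hy
    rw [md_add]
    by_cases hsep : (∃ x ∈ W, x ∈ Z) ∧ (∃ y ∈ W, y ∉ Z)
    · have h4 := h3 Z hsep.1 hsep.2
      rcases hM' with h | h
      · rw [h]; omega
      · rw [h, md_cons] at h4
        split_ifs at h4 with h5
        · omega
        · have := wE_cross w Z h5
          omega
    · have key : ∃ x ∈ w.support, ¬ (u ∈ Z ↔ x ∈ Z) ∧ ¬ (v ∈ Z ↔ x ∈ Z) := by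
        obtain ⟨x, hxW, hxZ⟩ := hx
        obtain ⟨y, hyW, hyZ⟩ := hy
        rw [mem_Wext] at hxW hyW
        by_cases huZ : u ∈ Z
        · have hall : ∀ y ∈ W, y ∈ Z := by
            intro y hy; by_contra h; exact hsep ⟨⟨u, hu, huZ⟩, y, hy, h⟩
          have hyw : y ∈ w.support := hyW.resolve_left fun h => hyZ (hall y h)
          exact ⟨y, hyw, by simp [huZ, hyZ], by simp [hall v hv, hyZ]⟩
        · have hall : ∀ y ∈ W, y ∉ Z := by
            intro y hy h; exact hsep ⟨⟨y, hy, h⟩, u, hu, huZ⟩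
          have hxw : x ∈ w.support := hxW.resolve_left fun h => hall x h hxZ
          exact ⟨x, hxw, by simp [huZ, hxZ], by simp [hall v hv, hxZ]⟩
      obtain ⟨x, hxw, g1, g2⟩ := key
      have := wE_cross_two w hxw Z g1 g2
      omega

/-- Degrees after adding an ear. -/
theorem ear_deg (W : Finset V) (M : Multiset (Sym2 V)) (hM : Good2 G W M) {u v : V}
    (w : G.Walk u v) (hw : w.IsPath) (hinter : ∀ x ∈ w.support, x = u ∨ x = v ∨ x ∉ W)
    (hd : ∀ x, mdg M x ≤ 3) (x : V) (hxu : x ≠ u) (hxv : x ≠ v) : mdg (M + wE w) x ≤ 3 := by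
  rw [mdg_add]
  by_cases hx : x ∈ W
  · rw [mdg_wE_notMem w (fun h => by rcases hinter x h with h | h | h <;> contradiction)]
    exact hd x
  · rw [mdg_zero_of_out W M hM.2.1 x hx]
    have := mdg_wE_le w hw x; omega

/-- Insertion: an edge `uv` of `M` is replaced by an ear from `u` to `v`. -/
theorem insertion (W : Finset V) (M' : Multiset (Sym2 V)) {u v : V}
    (hM : Good2 G W (s(u, v) ::ₘ M')) (hd : ∀ x, mdg (s(u, v) ::ₘ M') x ≤ 3)
    (w : G.Walk u v) (hw : w.IsPath) (hu : u ∈ W) (hv : v ∈ W)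
    (hinter : ∀ x ∈ w.support, x = u ∨ x = v ∨ x ∉ W) :
    Good2 G (Wext W w) (M' + wE w) ∧ ∀ x, mdg (M' + wE w) x ≤ 3 := by
  refine ⟨ear_two W _ M' hM w hu hv (Or.inr rfl), fun x => ?_⟩
  have hx := hd x
  rw [mdg_cons] at hx
  rw [mdg_add]
  by_cases hxu : x = u
  · subst hxu
    have := mdg_wE_start w hw
    simp at hx; omega
  by_cases hxv : x = v
  · subst hxv
    have := mdg_wE_end w hw
    simp at hx; omega
  have := ear_deg W _ hM w hw hinter hd x hxu hxv
  rw [mdg_add, mdg_cons] at this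
  omega

end Ears

set_option linter.unusedSectionVars false
set_option linter.unusedSimpArgs false
set_option linter.unusedVariables false
open SimpleGraph

/-! ### Part 7: claw-free graphs without cut vertices have spanning subcubic 2EC multigraphs -/
section Claw
open Classical
variable {V : Type*} {G : SimpleGraph V}

/-- The edges of `M` at `x`. -/
noncomputable def atv (M : Multiset (Sym2 V)) (x : V) : Multiset (Sym2 V) := M.filter (x ∈ ·)

theorem card_atv (M : Multiset (Sym2 V)) (x : V) : (atv M x).card = mdg M x := by
  rw [mdg, Multiset.countP_eq_card_filter]; rfl

theorem atv_add (M N : Multiset (Sym2 V)) (x : V) : atv (M + N) x = atv M x + atv N x :=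
  Multiset.filter_add _ _ _

theorem atv_single (M : Multiset (Sym2 V)) (y z x : V) (h1 : x ≠ y) (h2 : x ≠ z) :
    atv {s(y, z)} x = 0 := by
  rw [atv, Multiset.filter_eq_nil]
  intro e he
  rw [Multiset.mem_singleton] at he
  rw [he, Sym2.mem_iff]
  tauto

theorem fix_three (W : Finset V) (M2 M0 : Multiset (Sym2 V)) (hM : Good2 G W M2) (u a b c p : V)
    (hM2 : M2 = {s(u, a)} + {s(u, b)} + {s(u, c)} + {s(u, p)} + M0) (hu : ∀ e ∈ M0, u ∉ e)
    (hab : G.Adj a b) (hac : G.Adj a c) :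
    ∃ M3, Good2 G W M3 ∧ mdg M3 u ≤ 3 ∧ (∀ x, x ≠ u → mdg M3 x ≤ mdg M2 x) ∧
      ∀ v, v ≠ u → v ≠ a → v ≠ b → v ≠ c → atv M3 v = atv M2 v := by
  obtain ⟨h1, h2, h3⟩ := hM
  have ea : s(u, a) ∈ M2 := by rw [hM2]; simp
  have eb : s(u, b) ∈ M2 := by rw [hM2]; simp
  have ec : s(u, c) ∈ M2 := by rw [hM2]; simp
  have ep : s(u, p) ∈ M2 := by rw [hM2]; simp
  have ha : G.Adj u a := h1 _ ea
  have hb : G.Adj u b := h1 _ eb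
  have hc : G.Adj u c := h1 _ ec
  have hp : G.Adj u p := h1 _ ep
  have huW : u ∈ W := h2 _ ea u (by simp)
  have haW : a ∈ W := h2 _ ea a (by simp)
  have hbW : b ∈ W := h2 _ eb b (by simp)
  have hcW : c ∈ W := h2 _ ec c (by simp)
  have hpW : p ∈ W := h2 _ ep p (by simp)
  have hM0 : ∀ e ∈ M0, e ∈ M2 := fun e he => by rw [hM2]; exact Multiset.mem_add.2 (Or.inr he)
  have gen : ∀ b c, b ∈ W → c ∈ W → b ≠ u → c ≠ u → G.Adj a b → s(u, c) ∈ M2 →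
      M2 = {s(u, a)} + {s(u, b)} + {s(u, c)} + {s(u, p)} + M0 →
      TwoEC W ({s(a, b)} + {s(u, c)} + {s(u, p)} + M0) →
      ∃ M3, Good2 G W M3 ∧ mdg M3 u ≤ 3 ∧ (∀ x, x ≠ u → mdg M3 x ≤ mdg M2 x) ∧
      ∀ v, v ≠ u → v ≠ a → v ≠ b → v ≠ c → atv M3 v = atv M2 v := by
    intro b c hbW hcW hb hc hab ec hM2 hT
    refine ⟨_, ⟨?_, ?_, hT⟩, ?_, ?_, ?_⟩
    · intro e he
      simp only [Multiset.mem_add, Multiset.mem_singleton] at he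
      rcases he with ((rfl | rfl) | rfl) | he
      · exact hab
      · exact h1 _ ec
      · exact hp
      · exact h1 _ (hM0 e he)
    · intro e he x hx
      simp only [Multiset.mem_add, Multiset.mem_singleton] at he
      rcases he with ((rfl | rfl) | rfl) | he
      · rcases Sym2.mem_iff.1 hx with rfl | rfl <;> assumption
      · exact h2 _ ec x hx
      · exact h2 _ ep x hx
      · exact h2 _ (hM0 e he) x hx
    · simp only [mdg_add, mdg_single, mdg_eq_zero M0 u hu, ha.ne, hb.symm]
      simp
    · intro x hx
      rw [hM2]
      simp only [mdg_add, mdg_single, hx, false_or]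
      have haux : (if x = a ∨ x = b then 1 else 0) ≤
          (if x = a then 1 else 0) + (if x = b then (1 : ℕ) else 0) := by
        by_cases q1 : x = a
        · simp [q1]
        · simp [q1]
      omega
    · intro v g1 g2 g3 g4
      rw [hM2]
      simp only [atv_add, atv_single M0 _ _ v g1 g2, atv_single M0 _ _ v g1 g3,
        atv_single M0 _ _ v g2 g3, atv_single M0 _ _ v g1 g4, zero_add]
  rcases split_off W u a b c p M0 hu huW haW hbW hcW hpW ha.ne' hb.ne' hc.ne' hp.ne'
    (hM2 ▸ h3) with h | h
  · exact gen b c hbW hcW hb.ne' hc.ne' hab ec hM2 h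
  · obtain ⟨M3, g1, g2, g3, g4⟩ := gen c b hcW hbW hc.ne' hb.ne' hac eb (by rw [hM2]; abel) h
    exact ⟨M3, g1, g2, g3, fun v k1 k2 k3 k4 => g4 v k1 k2 k4 k3⟩

theorem fix_vertex (W : Finset V) (M2 F : Multiset (Sym2 V)) (hM : Good2 G W M2) (u p : V)
    (hF : atv M2 u = F + {s(u, p)}) (hF3 : F.card ≤ 3)
    (hN : ∀ a b, s(u, a) ∈ F → s(u, b) ∈ F → a ≠ b → G.Adj a b)
    (hns : F.card = 3 → ∃ a b, s(u, a) ∈ F ∧ s(u, b) ∈ F ∧ a ≠ b) :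
    ∃ M3, Good2 G W M3 ∧ mdg M3 u ≤ 3 ∧ (∀ x, x ≠ u → mdg M3 x ≤ mdg M2 x) ∧
      ∀ v, v ≠ u → s(u, v) ∉ F → atv M3 v = atv M2 v := by
  have hcard : mdg M2 u = F.card + 1 := by
    rw [← card_atv, hF]; simp
  by_cases h3 : F.card = 3
  swap
  · exact ⟨M2, hM, by omega, fun _ _ => le_rfl, fun _ _ _ => rfl⟩
  have hFu : ∀ e ∈ F, ∃ a, e = s(u, a) := by
    intro e he
    have : e ∈ atv M2 u := by rw [hF]; exact Multiset.mem_add.2 (Or.inl he)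
    obtain ⟨a, ha⟩ := (Multiset.mem_filter.1 this).2
    exact ⟨a, ha⟩
  obtain ⟨e1, e2, e3, hF'⟩ := Multiset.card_eq_three.1 h3
  obtain ⟨a, rfl⟩ := hFu e1 (by rw [hF']; simp)
  obtain ⟨b, rfl⟩ := hFu e2 (by rw [hF']; simp)
  obtain ⟨c, rfl⟩ := hFu e3 (by rw [hF']; simp)
  have hFe : F = {s(u, a)} + {s(u, b)} + {s(u, c)} := by
    rw [hF']; rfl
  have ma : s(u, a) ∈ F := by rw [hF']; simp
  have mb : s(u, b) ∈ F := by rw [hF']; simp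
  have mc : s(u, c) ∈ F := by rw [hF']; simp
  have hsplit : M2 = F + {s(u, p)} + M2.filter (fun e => ¬ u ∈ e) := by
    rw [← hF]; exact (Multiset.filter_add_not _ _).symm
  have hu : ∀ e ∈ M2.filter (fun e => ¬ u ∈ e), u ∉ e := fun e he => (Multiset.mem_filter.1 he).2
  have fin : ∀ a b c, s(u, a) ∈ F → s(u, b) ∈ F → s(u, c) ∈ F → F = {s(u, a)} + {s(u, b)} + {s(u, c)} →
      a ≠ b → a ≠ c → ∃ M3, Good2 G W M3 ∧ mdg M3 u ≤ 3 ∧ (∀ x, x ≠ u → mdg M3 x ≤ mdg M2 x) ∧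
      ∀ v, v ≠ u → s(u, v) ∉ F → atv M3 v = atv M2 v := by
    intro a b c ma mb mc hFe hab hac
    obtain ⟨M3, g1, g2, g3, g4⟩ := fix_three W M2 _ hM u a b c p (by rw [← hFe]; exact hsplit) hu
      (hN a b ma mb hab) (hN a c ma mc hac)
    refine ⟨M3, g1, g2, g3, fun v k1 k2 => g4 v k1 ?_ ?_ ?_⟩
    · rintro rfl; exact k2 ma
    · rintro rfl; exact k2 mb
    · rintro rfl; exact k2 mc
  by_cases hab : a = b
  · by_cases hac : a = c
    · exfalso
      subst hab; subst hac
      obtain ⟨x, y, hx, hy, hxy⟩ := hns h3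
      rw [hF'] at hx hy
      simp only [Multiset.insert_eq_cons, Multiset.mem_cons, Multiset.mem_singleton, or_self,
        Sym2.congr_right] at hx hy
      exact hxy (hx.trans hy.symm)
    · exact fin c a b mc ma mb (by rw [hFe]; abel) (fun h => hac h.symm) (fun h => hac (hab.trans h.symm))
  · by_cases hac : a = c
    · exact fin b a c mb ma mc (by rw [hFe]; abel) (fun h => hab h.symm) (fun h => hab (hac.trans h.symm))
    · exact fin a b c ma mb mc hFe hab hac

theorem not_all_same (W : Finset V) (M : Multiset (Sym2 V)) (hM : Good2 G W M)
    (hd : ∀ x, mdg M x ≤ 3) (u v : V) (hu : u ∈ W) (hv : v ∈ W) (huv : u ≠ v) (hn : s(u, v) ∉ M)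
    (h3 : (atv M u).card = 3) : ∃ a b, s(u, a) ∈ atv M u ∧ s(u, b) ∈ atv M u ∧ a ≠ b := by
  by_contra hno
  push Not at hno
  have hFu : ∀ e ∈ atv M u, ∃ a, e = s(u, a) := by
    intro e he
    obtain ⟨a, ha⟩ := (Multiset.mem_filter.1 he).2
    exact ⟨a, ha⟩
  obtain ⟨e1, e2, e3, hF'⟩ := Multiset.card_eq_three.1 h3
  obtain ⟨a, rfl⟩ := hFu e1 (by rw [hF']; simp)
  obtain ⟨b, rfl⟩ := hFu e2 (by rw [hF']; simp)
  obtain ⟨c, rfl⟩ := hFu e3 (by rw [hF']; simp)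
  have ma : s(u, a) ∈ atv M u := by rw [hF']; simp
  have mb : s(u, b) ∈ atv M u := by rw [hF']; simp
  have mc : s(u, c) ∈ atv M u := by rw [hF']; simp
  have hab := hno a b ma mb
  have hac := hno a c ma mc
  subst hab; subst hac
  have hFe : atv M u = {s(u, a)} + {s(u, a)} + {s(u, a)} := by
    rw [hF']; rfl
  have hsplit : M = atv M u + M.filter (fun e => ¬ u ∈ e) := (Multiset.filter_add_not _ _).symm
  have hva : v ≠ a := by
    rintro rfl; exact hn (Multiset.mem_filter.1 ma).1
  have h2 := hM.2.2 {u, a} ⟨u, hu, by simp⟩ ⟨v, hv, by simp [huv.symm, hva]⟩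
  obtain ⟨e, heM, y, z, rfl, hy, hz⟩ := Multiset.countP_pos.1 (by unfold md at h2; omega :
    0 < M.countP (btw {u, a} {u, a}ᶜ))
  have hzz : z ≠ u ∧ z ≠ a := by simpa using hz
  rcases hy with rfl | hy
  · have : s(y, z) ∈ atv M y := Multiset.mem_filter.2 ⟨heM, by simp⟩
    exact hzz.2 (hno z a this ma)
  · have hy : y = a := hy
    subst hy
    have h4 := hd y
    rw [hsplit, hFe, mdg_add, mdg_add, mdg_add, mdg_single] at h4
    simp only [or_true, if_true] at h4
    have h5 : mdg (M.filter (fun e => ¬ u ∈ e)) y = 0 := by omega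
    have hua : G.Adj u y := hM.1 _ (Multiset.mem_filter.1 ma).1
    refine Multiset.countP_eq_zero.1 h5 s(y, z) (Multiset.mem_filter.2 ⟨heM, ?_⟩) (by simp)
    rw [Sym2.mem_iff]
    rintro (h | h)
    · exact hua.ne h
    · exact hzz.1 h.symm

theorem nbrs_adj (hclaw : ∀ u a b c, G.Adj u a → G.Adj u b → G.Adj u c → a ≠ b → a ≠ c → b ≠ c →
      G.Adj a b ∨ G.Adj a c ∨ G.Adj b c) (W : Finset V) (M : Multiset (Sym2 V)) (hM : Good2 G W M)
    (hd : ∀ x, mdg M x ≤ 3)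
    (hmax : ∀ W' M', Good2 G W' M' → (∀ x, mdg M' x ≤ 3) → W'.card ≤ W.card)
    (u p : V) (hu : u ∈ W) (hp : p ∉ W) (hup : G.Adj u p) (a b : V) (ha : s(u, a) ∈ M)
    (hb : s(u, b) ∈ M) (hab : a ≠ b) : G.Adj a b := by
  have key : ∀ a, s(u, a) ∈ M → ¬ G.Adj a p := by
    intro a ha hap
    obtain ⟨M', rfl⟩ := Multiset.exists_cons_of_mem ha
    have hua : G.Adj u a := hM.1 _ ha
    have haW : a ∈ W := hM.2.1 _ ha a (by simp)
    have hpa : p ≠ a := fun h => hp (h ▸ haW)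
    have hpath : (Walk.cons hup (Walk.cons hap.symm Walk.nil)).IsPath := by
      simp [Walk.cons_isPath_iff, hup.ne, hua.ne, hpa]
    obtain ⟨g1, g2⟩ := insertion W M' hM hd (Walk.cons hup (Walk.cons hap.symm Walk.nil)) hpath hu haW
      (by intro x hx; simp at hx; rcases hx with rfl | rfl | rfl <;> simp [hp])
    have := hmax _ _ g1 g2
    have hlt : W.card < (Wext W (Walk.cons hup (Walk.cons hap.symm Walk.nil))).card := by
      apply Finset.card_lt_card
      refine ⟨fun x hx => (mem_Wext _ _ _).2 (Or.inl hx), fun h => hp (h ?_)⟩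
      rw [mem_Wext]; simp
    omega
  have haW : a ∈ W := hM.2.1 _ ha a (by simp)
  have hbW : b ∈ W := hM.2.1 _ hb b (by simp)
  rcases hclaw u a b p (hM.1 _ ha) (hM.1 _ hb) hup hab (fun h => hp (h ▸ haW))
    (fun h => hp (h ▸ hbW)) with h | h | h
  · exact h
  · exact absurd h (key a ha)
  · exact absurd h (key b hb)

theorem claw_multigraph [Fintype V] (hn : 2 ≤ Fintype.card V)
    (h1 : ∀ X : Set V, X.Nonempty → X ≠ Set.univ → ∃ a ∈ X, ∃ b ∉ X, G.Adj a b)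
    (h2 : ∀ (v : V) (X : Set V), X.Nonempty → v ∉ X → (∃ y ∉ X, y ≠ v) →
      ∃ a ∈ X, ∃ b ∉ X, b ≠ v ∧ G.Adj a b)
    (hclaw : ∀ u a b c, G.Adj u a → G.Adj u b → G.Adj u c → a ≠ b → a ≠ c → b ≠ c →
      G.Adj a b ∨ G.Adj a c ∨ G.Adj b c) :
    ∃ M, Good2 G Finset.univ M ∧ ∀ x, mdg M x ≤ 3 := by
  have hbase : ∃ W : Finset V, 2 ≤ W.card ∧ ∃ M, Good2 G W M ∧ ∀ x, mdg M x ≤ 3 := by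
    obtain ⟨x0, x1, hx01⟩ := Fintype.one_lt_card_iff.1 (by omega : 1 < Fintype.card V)
    obtain ⟨x, -, y, -, hxy⟩ := h1 {x0} ⟨x0, rfl⟩ (fun h => hx01 (by
      have := Set.mem_univ x1; rw [← h] at this; exact this.symm))
    refine ⟨{x, y}, by rw [Finset.card_pair hxy.ne], {s(x, y)} + {s(x, y)}, ⟨?_, ?_, ?_⟩, ?_⟩
    · intro e he; simp at he; rw [he]; exact hxy
    · intro e he z hz; simp at he; rw [he] at hz; simpa using hz
    · rintro Z ⟨p, hp, hpZ⟩ ⟨q, hq, hqZ⟩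
      rw [md_add, md_single]
      simp only [Finset.mem_insert, Finset.mem_singleton] at hp hq
      have : ¬ (x ∈ Z ↔ y ∈ Z) := by
        rcases hp with rfl | rfl <;> rcases hq with rfl | rfl <;> tauto
      rw [if_neg this]
    · intro z; rw [mdg_add, mdg_single]; split_ifs <;> omega
  obtain ⟨W0, hW0, hW0M⟩ := hbase
  obtain ⟨W, hWm, hWmax⟩ := Finset.exists_max_image
    (Finset.univ.filter fun W : Finset V => ∃ M, Good2 G W M ∧ ∀ x, mdg M x ≤ 3) Finset.card
    ⟨W0, by simpa using hW0M⟩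
  obtain ⟨M, hM, hd⟩ : ∃ M, Good2 G W M ∧ ∀ x, mdg M x ≤ 3 := by simpa using hWm
  have hmax : ∀ W' M', Good2 G W' M' → (∀ x, mdg M' x ≤ 3) → W'.card ≤ W.card :=
    fun W' M' g1 g2 => hWmax W' (by
      simp only [Finset.mem_filter, Finset.mem_univ, true_and]; exact ⟨M', g1, g2⟩)
  have hW2 : 2 ≤ W.card := by
    obtain ⟨M', g1, g2⟩ := hW0M
    exact hW0.trans (hmax W0 M' g1 g2)
  by_cases hWu : W = Finset.univ
  · subst hWu; exact ⟨M, hM, hd⟩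
  exfalso
  obtain ⟨w0, hw0⟩ := Finset.card_pos.1 (by omega : 0 < W.card)
  obtain ⟨u, hu, p, hp, hup⟩ := h1 (W : Set V) ⟨w0, hw0⟩ (fun h => hWu (by
    rwa [Finset.coe_eq_univ] at h))
  replace hu : u ∈ W := hu
  replace hp : p ∉ W := hp
  let D : Set V := {z | ∃ w : G.Walk p z, ∀ x ∈ w.support, x ∉ W}
  obtain ⟨y, hyW, hyu⟩ := Finset.exists_mem_ne (by omega : 1 < W.card) u
  have hDW : ∀ z ∈ D, z ∉ W := by
    rintro z ⟨w, hw⟩; exact hw z w.end_mem_support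
  obtain ⟨q, ⟨w, hw⟩, v, hvD, hvu, hqv⟩ := h2 u D ⟨p, Walk.nil, by simp [hp]⟩
    (fun h => hDW u h hu) ⟨y, fun h => hDW y h hyW, hyu⟩
  have hv : v ∈ W := by
    by_contra hv
    apply hvD
    refine ⟨w.concat hqv, fun x hx => ?_⟩
    rw [Walk.support_concat] at hx
    simp only [List.concat_eq_append, List.mem_append, List.mem_singleton] at hx
    rcases hx with hx | rfl
    · exact hw x hx
    · exact hv
  have hq : q ∉ W := hw q w.end_mem_support
  -- the path
  obtain ⟨w1, hw1p, hw1⟩ : ∃ w1 : G.Walk p q, w1.IsPath ∧ ∀ x ∈ w1.support, x ∉ W :=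
    ⟨w.bypass, w.bypass_isPath, fun x hx => hw x (w.support_bypass_subset_support hx)⟩
  have hvs : v ∉ w1.support := fun h => hw1 v h hv
  have hus : u ∉ w1.support := fun h => hw1 u h hu
  let ear : G.Walk u v := Walk.cons hup (w1.concat hqv)
  have hear : ear.IsPath := by
    rw [Walk.cons_isPath_iff]
    refine ⟨hw1p.concat hvs hqv, ?_⟩
    rw [Walk.support_concat]
    simp only [List.concat_eq_append, List.mem_append, List.mem_singleton]
    rintro (h | h)
    · exact hus h
    · exact hvu h.symm
  have hsup : ∀ x, x ∈ ear.support ↔ x = u ∨ x ∈ w1.support ∨ x = v := by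
    intro x
    simp only [ear, Walk.support_cons, Walk.support_concat, List.concat_eq_append, List.mem_cons,
      List.mem_append, List.mem_singleton, List.not_mem_nil, or_false]
  have hinter : ∀ x ∈ ear.support, x = u ∨ x = v ∨ x ∉ W := by
    intro x hx
    rcases (hsup x).1 hx with h | h | h
    · exact Or.inl h
    · exact Or.inr (Or.inr (hw1 x h))
    · exact Or.inr (Or.inl h)
  have hEear : wE ear = {s(u, p)} + wE w1 + {s(v, q)} := by
    simp only [ear, wE_cons]
    rw [← Multiset.singleton_add, add_assoc]
    congr 1
    rw [Sym2.eq_swap, wE, wE, Walk.edges_concat]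
    simp [← Multiset.coe_add]
  have hlt : W.card < (Wext W ear).card := by
    apply Finset.card_lt_card
    refine ⟨fun x hx => (mem_Wext _ _ _).2 (Or.inl hx), fun h => hp (h ?_)⟩
    rw [mem_Wext, hsup]; exact Or.inr (Or.inr (Or.inl w1.start_mem_support))
  have hnadj : s(u, v) ∉ M := by
    intro hm
    obtain ⟨M', rfl⟩ := Multiset.exists_cons_of_mem hm
    obtain ⟨g1, g2⟩ := insertion W M' hM hd ear hear hu hv hinter
    have := hmax _ _ g1 g2
    omega
  have hM2 : Good2 G (Wext W ear) (M + wE ear) := ear_two W M M hM ear hu hv (Or.inl rfl)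
  have huq : u ≠ q := fun h => hq (h ▸ hu)
  have hvp : v ≠ p := fun h => hp (h ▸ hv)
  have atv_w1 : ∀ x, x ∉ w1.support → atv (wE w1) x = 0 := by
    intro x hx
    rw [atv, Multiset.filter_eq_nil]
    exact fun e he hxe => hx (wE_mem_support w1 e he hxe)
  have atv_self : ∀ x z : V, atv {s(x, z)} x = {s(x, z)} := by
    intro x z
    rw [atv, Multiset.filter_eq_self]
    intro e he
    rw [Multiset.mem_singleton] at he; rw [he]; simp
  have hatu : atv (M + wE ear) u = atv M u + {s(u, p)} := by
    rw [atv_add, hEear, atv_add, atv_add, atv_w1 u hus, atv_self,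
      atv_single M v q u hvu.symm huq, add_zero, add_zero]
  have hatv : atv (M + wE ear) v = atv M v + {s(v, q)} := by
    rw [atv_add, hEear, atv_add, atv_add, atv_w1 v hvs, atv_self,
      atv_single M u p v hvu hvp, add_zero, zero_add]
  have mema : ∀ x e, e ∈ atv M x → e ∈ M := fun x e he => (Multiset.mem_filter.1 he).1
  obtain ⟨M3, k1, k2, k3, k4⟩ := fix_vertex (Wext W ear) _ (atv M u) hM2 u p hatu
    (by rw [card_atv]; exact hd u)
    (fun a b ha hb hab => nbrs_adj hclaw W M hM hd hmax u p hu hp hup a b (mema _ _ ha)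
      (mema _ _ hb) hab)
    (not_all_same W M hM hd u v hu hv hvu.symm hnadj)
  have hat3 := k4 v hvu (fun h => hnadj (mema _ _ h))
  obtain ⟨M4, l1, l2, l3, -⟩ := fix_vertex (Wext W ear) M3 (atv M v) k1 v q (hat3.trans hatv)
    (by rw [card_atv]; exact hd v)
    (fun a b ha hb hab => nbrs_adj hclaw W M hM hd hmax v q hv hq hqv.symm a b (mema _ _ ha)
      (mema _ _ hb) hab)
    (not_all_same W M hM hd v u hv hu hvu (by rw [Sym2.eq_swap]; exact hnadj))
  have := hmax _ M4 l1 (by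
    intro x
    by_cases hxv : x = v
    · rw [hxv]; exact l2
    refine (l3 x hxv).trans ?_
    by_cases hxu : x = u
    · rw [hxu]; exact k2
    exact (k3 x hxu).trans (ear_deg W M hM ear hear hinter hd x hxu hxv))
  omega

end Claw

set_option linter.unusedSectionVars false
set_option linter.unusedSimpArgs false
set_option linter.unusedVariables false
open SimpleGraph

/-! ### Part 8: graphs without cut vertices -/
section NoCut
open Classical
variable {V : Type*} {G : SimpleGraph V}

theorem countP_eq_card_get {α : Type*} (l : List α) (p : α → Prop) [DecidablePred p] :
    (l : Multiset α).countP p = (Finset.univ.filter fun i : Fin l.length => p (l.get i)).card := by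
  have h : (l : Multiset α) = (Finset.univ : Finset (Fin l.length)).val.map l.get := by
    rw [Fin.univ_val_map, List.ofFn_get]
  conv_lhs => rw [h]
  rw [Multiset.countP_map]
  rfl

theorem walk_of_multigraph [Fintype V] (hn : 2 ≤ Fintype.card V) (M : Multiset (Sym2 V))
    (hM : Good2 G Finset.univ M) (hd : ∀ x, mdg M x ≤ 3) :
    ∃ (v : V) (w : G.Walk v v), (∀ u, u ∈ w.support) ∧ 3 * w.length ≤ 4 * Fintype.card V := by
  obtain ⟨l, rfl⟩ : ∃ l : List (Sym2 V), M = l := ⟨M.toList, by simp⟩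
  have hout : ∀ e : Sym2 V, s(e.out.1, e.out.2) = e := fun e => Quot.out_eq e
  refine core_subcubic G (fun i : Fin l.length => (l.get i).out.1) (fun i => (l.get i).out.2)
    ?_ hn ?_ ?_
  · intro i
    have := hM.1 (l.get i) (by simp)
    rw [← hout (l.get i), SimpleGraph.mem_edgeSet] at this
    exact this
  · intro X hX hX'
    have h := hM.2.2 (X : Set V) (by obtain ⟨x, hx⟩ := hX; exact ⟨x, by simp, by simpa using hx⟩)
      (by
        by_contra hcon
        push Not at hcon
        exact hX' (Finset.eq_univ_iff_forall.2 fun y => by simpa using hcon y (by simp)))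
    rw [md, countP_eq_card_get] at h
    refine h.trans (le_of_eq ?_)
    congr 1
    ext i
    simp only [Finset.mem_filter, Finset.mem_univ, true_and]
    conv_lhs => rw [← hout (l.get i)]
    rw [btw_mk]
    simp only [Finset.mem_coe, Set.mem_compl_iff]
    tauto
  · intro v
    have h := hd v
    rw [mdg, countP_eq_card_get] at h
    refine le_trans (le_of_eq ?_) h
    unfold mdeg
    congr 1
    ext i
    simp only [Finset.mem_filter, Finset.mem_univ, true_and]
    conv_rhs => rw [← hout (l.get i)]
    rw [Sym2.mem_iff]
    simp only [eq_comm]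

theorem subcubic_multigraph [Fintype V] (hn : 2 ≤ Fintype.card V)
    (h1 : ∀ X : Set V, X.Nonempty → X ≠ Set.univ → ∃ a ∈ X, ∃ b ∉ X, G.Adj a b)
    (h2 : ∀ v (X : Set V), X.Nonempty → v ∉ X → (∃ y ∉ X, y ≠ v) →
      ∃ a ∈ X, ∃ b ∉ X, b ≠ v ∧ G.Adj a b)
    (hdeg : ∀ v, {u | G.Adj v u}.ncard ≤ 3) :
    ∃ M, Good2 G Finset.univ M ∧ ∀ x, mdg M x ≤ 3 := by
  by_cases hc : Fintype.card V = 2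
  · rw [← Nat.card_eq_fintype_card, Nat.card_eq_two_iff] at hc
    obtain ⟨x, y, hxy, huniv⟩ := hc
    have hall : ∀ z, z = x ∨ z = y := by
      intro z
      have : z ∈ ({x, y} : Set V) := by rw [huniv]; trivial
      simpa using this
    have hadj : G.Adj x y := by
      obtain ⟨a, ha, b, hb, hab⟩ := h1 {x} ⟨x, rfl⟩ (by
        intro h
        have : y ∈ ({x} : Set V) := by rw [h]; trivial
        exact hxy this.symm)
      rw [Set.mem_singleton_iff] at ha hb
      subst ha
      rcases hall b with rfl | rfl
      · exact absurd rfl hb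
      · exact hab
    refine ⟨s(x, y) ::ₘ {s(x, y)}, ⟨?_, ?_, ?_⟩, ?_⟩
    · intro e he
      simp at he
      subst he
      exact hadj
    · simp
    · intro Z hZ hZ'
      obtain ⟨p, -, hp⟩ := hZ
      obtain ⟨q, -, hq⟩ := hZ'
      rw [md_cons, md_single]
      have : ¬ (x ∈ Z ↔ y ∈ Z) := by
        rcases hall p with rfl | rfl <;> rcases hall q with rfl | rfl <;> tauto
      simp [this]
    · intro z
      rw [mdg_cons, mdg_single]
      split_ifs <;> omega
  · have hn3 : 3 ≤ Fintype.card V := by omega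
    refine ⟨G.edgeFinset.val, ⟨?_, ?_, ?_⟩, ?_⟩
    · intro e he
      simpa using he
    · simp
    · intro Z hZ hZ'
      obtain ⟨p, -, hp⟩ := hZ
      obtain ⟨q, -, hq⟩ := hZ'
      obtain ⟨a, ha, b, hb, hab⟩ := h1 Z ⟨p, hp⟩ (by rintro rfl; exact hq trivial)
      -- a second crossing edge
      obtain ⟨c, hc1, d, hd1, hcd, hne⟩ : ∃ c ∈ Z, ∃ d ∉ Z, G.Adj c d ∧ s(c, d) ≠ s(a, b) := by
        by_cases hZa : ∃ z ∈ Z, z ≠ a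
        · obtain ⟨z, hz, hza⟩ := hZa
          obtain ⟨c, hc1, d, hd1, hda, hcd⟩ := h2 a (Z \ {a}) ⟨z, hz, hza⟩ (by simp)
            ⟨b, fun h => hb h.1, fun h => hb (h ▸ ha)⟩
          have hdZ : d ∉ Z := fun h => hd1 ⟨h, hda⟩
          refine ⟨c, hc1.1, d, hdZ, hcd, ?_⟩
          intro h
          rw [Sym2.eq_iff] at h
          rcases h with ⟨h, -⟩ | ⟨-, h⟩
          · exact hc1.2 h
          · exact hda h
        · push Not at hZa
          have hz : ∃ z, z ∉ Z ∧ z ≠ b := by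
            by_contra hcon
            push Not at hcon
            have : Fintype.card V ≤ 2 := by
              have hsub : (Finset.univ : Finset V) ⊆ {a, b} := by
                intro z _
                by_cases hz : z ∈ Z
                · simp [hZa z hz]
                · simp [hcon z hz]
              calc Fintype.card V = (Finset.univ : Finset V).card := rfl
                _ ≤ _ := Finset.card_le_card hsub
                _ ≤ 2 := Finset.card_le_two
            omega
          obtain ⟨z, hz, hzb⟩ := hz
          obtain ⟨c, hc1, d, hd1, hda, hcd⟩ := h2 b (Zᶜ \ {b}) ⟨z, hz, hzb⟩ (by simp)
            ⟨a, fun h => h.1 ha, fun h => hb (h ▸ ha)⟩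
          have hdZ : d ∈ Z := by
            by_contra h
            exact hd1 ⟨h, hda⟩
          refine ⟨d, hdZ, c, hc1.1, hcd.symm, ?_⟩
          intro h
          rw [Sym2.eq_iff] at h
          rcases h with ⟨-, h⟩ | ⟨h, -⟩
          · exact hc1.2 h
          · exact hda h
      unfold md
      rw [Multiset.countP_eq_card_filter]
      change 2 ≤ (G.edgeFinset.filter (btw Z Zᶜ)).card
      have : 1 < (G.edgeFinset.filter (btw Z Zᶜ)).card := by
        rw [Finset.one_lt_card]
        refine ⟨s(c, d), ?_, s(a, b), ?_, hne⟩
        · simp only [Finset.mem_filter, mem_edgeFinset, mem_edgeSet]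
          exact ⟨hcd, c, d, rfl, hc1, hd1⟩
        · simp only [Finset.mem_filter, mem_edgeFinset, mem_edgeSet]
          exact ⟨hab, a, b, rfl, ha, hb⟩
      exact this
    · intro x
      unfold mdg
      rw [Multiset.countP_eq_card_filter]
      change (G.edgeFinset.filter (x ∈ ·)).card ≤ 3
      refine le_trans ?_ (hdeg x)
      rw [Set.ncard_eq_toFinset_card']
      refine le_trans (Finset.card_le_card ?_) (Finset.card_image_le (f := fun u => s(x, u)))
      intro e he
      rw [Finset.mem_filter, mem_edgeFinset] at he
      obtain ⟨he, y, rfl⟩ := he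
      rw [Finset.mem_image]
      exact ⟨y, by simpa using he, rfl⟩

theorem walk_of_no_cut [Fintype V] (hn : 2 ≤ Fintype.card V)
    (h1 : ∀ X : Set V, X.Nonempty → X ≠ Set.univ → ∃ a ∈ X, ∃ b ∉ X, G.Adj a b)
    (h2 : ∀ v (X : Set V), X.Nonempty → v ∉ X → (∃ y ∉ X, y ≠ v) →
      ∃ a ∈ X, ∃ b ∉ X, b ≠ v ∧ G.Adj a b)
    (h : (∀ v, {u | G.Adj v u}.ncard ≤ 3) ∨
      (∀ u a b c, G.Adj u a → G.Adj u b → G.Adj u c → a ≠ b → a ≠ c → b ≠ c →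
        G.Adj a b ∨ G.Adj a c ∨ G.Adj b c)) :
    ∃ (v : V) (w : G.Walk v v), (∀ u, u ∈ w.support) ∧ 3 * w.length ≤ 4 * Fintype.card V := by
  rcases h with h | h
  · obtain ⟨M, hM, hd⟩ := subcubic_multigraph hn h1 h2 h
    exact walk_of_multigraph hn M hM hd
  · obtain ⟨M, hM, hd⟩ := claw_multigraph hn h1 h2 h
    exact walk_of_multigraph hn M hM hd

end NoCut

set_option linter.unusedSectionVars false
set_option linter.unusedSimpArgs false
set_option linter.unusedVariables false
open SimpleGraph

/-! ### Part 9: gluing along cut vertices -/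
section Blocks
open Classical
variable {V : Type*} {G : SimpleGraph V}

/-- Connectedness of `A` in terms of cuts. -/
def CutConn (G : SimpleGraph V) (A : Finset V) : Prop :=
  ∀ X : Finset V, X ⊆ A → X.Nonempty → X ≠ A → ∃ a ∈ X, ∃ b ∈ A, b ∉ X ∧ G.Adj a b

/-- Held-Karp feasibility of symmetric weights on `A`. -/
def Feas (y : V → V → ℝ) (A : Finset V) : Prop :=
  ∀ X : Finset V, X ⊆ A → X.Nonempty → X ≠ A → 2 ≤ ∑ a ∈ X, ∑ b ∈ A \ X, y a b

theorem cutConn_part {A A1 A2 : Finset V} {v : V} (hA : CutConn G A) (hu : A1 ∪ A2 = A)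
    (hv1 : v ∈ A1) (hv2 : v ∈ A2) (hi : ∀ x ∈ A1, x ∈ A2 → x = v)
    (hsep : ∀ a ∈ A1, a ≠ v → ∀ b ∈ A2, b ≠ v → ¬ G.Adj a b) : CutConn G A1 := by
  have key : ∀ Y : Finset V, Y ⊆ A1 → Y.Nonempty → v ∉ Y →
      ∃ a ∈ Y, ∃ b ∈ A1, b ∉ Y ∧ G.Adj a b := by
    intro Y hY hne hvY
    obtain ⟨a, ha, b, hb, hbY, hab⟩ := hA Y (hY.trans (hu ▸ Finset.subset_union_left)) hne
      (by rintro rfl; exact hvY (hu ▸ Finset.mem_union_left _ hv1))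
    refine ⟨a, ha, b, ?_, hbY, hab⟩
    rw [← hu, Finset.mem_union] at hb
    rcases hb with hb | hb
    · exact hb
    · by_cases hbv : b = v
      · exact hbv ▸ hv1
      · exact absurd hab (hsep a (hY ha) (fun h => hvY (h ▸ ha)) b hb hbv)
  intro Y hY hne hne'
  by_cases hvY : v ∈ Y
  · obtain ⟨a, ha, b, hb, hbY, hab⟩ := key (A1 \ Y) Finset.sdiff_subset
      (by
        rw [Finset.sdiff_nonempty]
        exact fun h => hne' (Finset.Subset.antisymm hY h)) (by simp [hvY])
    simp only [Finset.mem_sdiff, not_and, not_not] at ha hbY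
    exact ⟨b, hbY hb, a, ha.1, ha.2, hab.symm⟩
  · exact key Y hY hne hvY

theorem feas_part {A A1 A2 : Finset V} {v : V} {y : V → V → ℝ} (hA : Feas y A)
    (hsymm : ∀ a b, y a b = y b a) (h0 : ∀ a b, ¬ G.Adj a b → y a b = 0) (hu : A1 ∪ A2 = A)
    (hv1 : v ∈ A1) (hv2 : v ∈ A2) (hi : ∀ x ∈ A1, x ∈ A2 → x = v)
    (hsep : ∀ a ∈ A1, a ≠ v → ∀ b ∈ A2, b ≠ v → ¬ G.Adj a b) : Feas y A1 := by
  have key : ∀ Y : Finset V, Y ⊆ A1 → Y.Nonempty → v ∉ Y →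
      2 ≤ ∑ a ∈ Y, ∑ b ∈ A1 \ Y, y a b := by
    intro Y hY hne hvY
    have h := hA Y (hY.trans (hu ▸ Finset.subset_union_left)) hne
      (by rintro rfl; exact hvY (hu ▸ Finset.mem_union_left _ hv1))
    refine h.trans (le_of_eq (Finset.sum_congr rfl fun a ha => ?_))
    symm
    apply Finset.sum_subset
    · exact Finset.sdiff_subset_sdiff (hu ▸ Finset.subset_union_left) (Finset.Subset.refl _)
    · intro b hb hb'
      rw [← hu] at hb
      simp only [Finset.mem_sdiff, Finset.mem_union] at hb hb'
      have hb1 : b ∉ A1 := fun h => hb' ⟨h, hb.2⟩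
      have hb2 : b ∈ A2 := by tauto
      exact h0 _ _ (hsep a (hY ha) (fun h => hvY (h ▸ ha)) b hb2 (fun h => hb1 (h ▸ hv1)))
  intro Y hY hne hne'
  by_cases hvY : v ∈ Y
  · have h := key (A1 \ Y) Finset.sdiff_subset
      (by
        rw [Finset.sdiff_nonempty]
        exact fun h => hne' (Finset.Subset.antisymm hY h)) (by simp [hvY])
    rw [Finset.sdiff_sdiff_eq_self hY, Finset.sum_comm] at h
    refine h.trans (le_of_eq (Finset.sum_congr rfl fun a _ => Finset.sum_congr rfl fun b _ => ?_))
    exact hsymm _ _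
  · exact key Y hY hne hvY

theorem val_part {A A1 A2 : Finset V} {v : V} {y : V → V → ℝ}
    (hnn : ∀ a b, 0 ≤ y a b) (h0 : ∀ a b, ¬ G.Adj a b → y a b = 0) (hu : A1 ∪ A2 = A)
    (hi : ∀ x ∈ A1, x ∈ A2 → x = v) :
    ∑ a ∈ A1, ∑ b ∈ A1, y a b + ∑ a ∈ A2, ∑ b ∈ A2, y a b ≤ ∑ a ∈ A, ∑ b ∈ A, y a b := by
  rw [← Finset.sum_product', ← Finset.sum_product', ← Finset.sum_product', ← Finset.sum_union_inter]
  have hz : ∑ p ∈ A1 ×ˢ A1 ∩ A2 ×ˢ A2, y p.1 p.2 = 0 := by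
    apply Finset.sum_eq_zero
    rintro ⟨a, b⟩ hp
    simp only [Finset.mem_inter, Finset.mem_product] at hp
    have h1 := hi a hp.1.1 hp.2.1
    have h2 := hi b hp.1.2 hp.2.2
    subst h1
    subst h2
    exact h0 _ _ (G.loopless.irrefl _)
  rw [hz, add_zero]
  apply Finset.sum_le_sum_of_subset_of_nonneg
  · subst hu
    apply Finset.union_subset
    · exact Finset.product_subset_product Finset.subset_union_left Finset.subset_union_left
    · exact Finset.product_subset_product Finset.subset_union_right Finset.subset_union_right
  · intro p _ _
    exact hnn _ _

/-- The class property on vertex sets, in elementary terms. -/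
def Nice (G : SimpleGraph V) (A : Finset V) : Prop :=
  (∀ v ∈ A, {u | u ∈ A ∧ G.Adj v u}.ncard ≤ 3) ∨
  (∀ u ∈ A, ∀ a ∈ A, ∀ b ∈ A, ∀ c ∈ A, G.Adj u a → G.Adj u b → G.Adj u c → a ≠ b → a ≠ c →
    b ≠ c → G.Adj a b ∨ G.Adj a c ∨ G.Adj b c)

theorem walk_no_cut_on {A : Finset V} (hA2 : 2 ≤ A.card) (hA : CutConn G A)
    (hcut : ∀ v ∈ A, CutConn G (A.erase v)) (hN : Nice G A) :
    ∃ (v : V) (w : G.Walk v v), (∀ u, u ∈ w.support ↔ u ∈ A) ∧ 3 * w.length ≤ 4 * A.card := by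
  have h1 : ∀ X : Set (A : Set V), X.Nonempty → X ≠ Set.univ →
      ∃ a ∈ X, ∃ b ∉ X, (G.induce (A : Set V)).Adj a b := by
    intro X hX hX'
    obtain ⟨a, ha, b, hb, hbX, hab⟩ := hA (A.filter fun a => ∃ h : a ∈ (A : Set V), (⟨a, h⟩ : (A : Set V)) ∈ X)
      (Finset.filter_subset _ _)
      (by
        obtain ⟨⟨x, hx⟩, hxX⟩ := hX
        exact ⟨x, Finset.mem_filter.2 ⟨hx, hx, hxX⟩⟩)
      (by
        intro h
        apply hX'
        rw [Set.eq_univ_iff_forall]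
        rintro ⟨x, hx⟩
        have hx' : x ∈ A := hx
        rw [← h, Finset.mem_filter] at hx'
        exact hx'.2.2)
    rw [Finset.mem_filter] at ha hbX
    obtain ⟨haA, haA', haX⟩ := ha
    exact ⟨⟨a, haA'⟩, haX, ⟨b, hb⟩, fun h => hbX ⟨hb, hb, h⟩, hab⟩
  have h2 : ∀ (v : (A : Set V)) (X : Set (A : Set V)), X.Nonempty → v ∉ X → (∃ y ∉ X, y ≠ v) →
      ∃ a ∈ X, ∃ b ∉ X, b ≠ v ∧ (G.induce (A : Set V)).Adj a b := by
    rintro ⟨v, hv⟩ X hX hvX ⟨⟨y, hy⟩, hyX, hyv⟩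
    obtain ⟨a, ha, b, hb, hbX, hab⟩ := hcut v hv
      (A.filter fun a => ∃ h : a ∈ (A : Set V), (⟨a, h⟩ : (A : Set V)) ∈ X)
      (by
        intro a ha
        rw [Finset.mem_filter] at ha
        obtain ⟨ha, ha', haX⟩ := ha
        rw [Finset.mem_erase]
        refine ⟨?_, ha⟩
        rintro rfl
        exact hvX haX)
      (by
        obtain ⟨⟨x, hx⟩, hxX⟩ := hX
        exact ⟨x, Finset.mem_filter.2 ⟨hx, hx, hxX⟩⟩)
      (by
        intro h
        have hy' : y ∈ A.erase v := by
          rw [Finset.mem_erase]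
          exact ⟨fun h => hyv (Subtype.ext h), hy⟩
        rw [← h, Finset.mem_filter] at hy'
        exact hyX hy'.2.2)
    rw [Finset.mem_filter] at ha hbX
    rw [Finset.mem_erase] at hb
    obtain ⟨haA, haA', haX⟩ := ha
    exact ⟨⟨a, haA'⟩, haX, ⟨b, hb.2⟩, fun h => hbX ⟨hb.2, hb.2, h⟩,
      fun h => hb.1 (congrArg Subtype.val h), hab⟩
  have hcard : Fintype.card (A : Set V) = A.card := by simp
  obtain ⟨v, w, hw, hlen⟩ := walk_of_no_cut (G := G.induce (A : Set V)) (by rw [hcard]; exact hA2)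
    h1 h2 (by
      rcases hN with h | h
      · left
        rintro ⟨v, hv⟩
        refine le_trans ?_ (h v hv)
        apply Set.ncard_le_ncard_of_injOn (fun u : (A : Set V) => (u : V))
        · rintro ⟨u, hu⟩ hadj
          exact ⟨hu, hadj⟩
        · intro a _ b _ hab
          exact Subtype.ext hab
      · right
        rintro ⟨u, hu⟩ ⟨a, ha⟩ ⟨b, hb⟩ ⟨c, hc⟩ hua hub huc hab hac hbc
        exact h u hu a ha b hb c hc hua hub huc (fun h => hab (Subtype.ext h))
          (fun h => hac (Subtype.ext h)) (fun h => hbc (Subtype.ext h)))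
  rw [hcard] at hlen
  refine ⟨_, w.map (Embedding.induce (A : Set V)).toHom, ?_, by rw [Walk.length_map]; exact hlen⟩
  intro u
  rw [Walk.support_map, List.mem_map]
  constructor
  · rintro ⟨⟨x, hx⟩, -, rfl⟩
    exact hx
  · intro hu
    exact ⟨⟨u, hu⟩, hw _, rfl⟩

theorem block_induction
    (H : ∀ A : Finset V, 2 ≤ A.card → CutConn G A → (∀ v ∈ A, CutConn G (A.erase v)) → Nice G A) :
    ∀ n, ∀ A : Finset V, A.card = n → 2 ≤ A.card → CutConn G A →
      ∃ (v : V) (w : G.Walk v v), (∀ u, u ∈ w.support ↔ u ∈ A) ∧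
        ∀ y : V → V → ℝ, (∀ a b, 0 ≤ y a b) → (∀ a b, y a b = y b a) →
          (∀ a b, ¬ G.Adj a b → y a b = 0) → Feas y A →
          3 * (w.length : ℝ) ≤ 2 * ∑ a ∈ A, ∑ b ∈ A, y a b := by
  intro n
  induction n using Nat.strong_induction_on with
  | _ n ih =>
    intro A hcard hA2 hA
    by_cases hcut : ∀ v ∈ A, CutConn G (A.erase v)
    · obtain ⟨v, w, hw, hlen⟩ := walk_no_cut_on hA2 hA hcut (H A hA2 hA hcut)
      refine ⟨v, w, hw, ?_⟩
      intro y hnn hsymm h0 hF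
      have hsum : (A.card : ℝ) * 2 ≤ ∑ a ∈ A, ∑ b ∈ A, y a b := by
        rw [← nsmul_eq_mul]
        apply Finset.card_nsmul_le_sum
        intro a ha
        have h := hF {a} (by simpa using ha) (Finset.singleton_nonempty _) (by
          intro h
          rw [← h] at hA2
          simp at hA2)
        rw [Finset.sum_singleton] at h
        exact h.trans (Finset.sum_le_sum_of_subset_of_nonneg Finset.sdiff_subset
          fun _ _ _ => hnn _ _)
      have hlen' : 3 * (w.length : ℝ) ≤ 4 * (A.card : ℝ) := by exact_mod_cast hlen
      linarith
    · push Not at hcut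
      obtain ⟨v, hv, hX⟩ := hcut
      unfold CutConn at hX
      push Not at hX
      obtain ⟨X, hXA, hXne, hXne', hX⟩ := hX
      have hvX : v ∉ X := fun h => by simpa using hXA h
      have hXA' : X ⊆ A := hXA.trans (Finset.erase_subset _ _)
      obtain ⟨z, hz, hzX⟩ : ∃ z ∈ A.erase v, z ∉ X := by
        by_contra hcon
        push Not at hcon
        exact hXne' (Finset.Subset.antisymm hXA hcon)
      rw [Finset.mem_erase] at hz
      have hu : insert v X ∪ (A \ X) = A := by
        ext x
        simp only [Finset.mem_union, Finset.mem_insert, Finset.mem_sdiff]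
        constructor
        · rintro ((rfl | h) | h)
          · exact hv
          · exact hXA' h
          · exact h.1
        · intro h
          by_cases hx : x ∈ X <;> tauto
      have hv1 : v ∈ insert v X := Finset.mem_insert_self _ _
      have hv2 : v ∈ A \ X := Finset.mem_sdiff.2 ⟨hv, hvX⟩
      have hi : ∀ x ∈ insert v X, x ∈ A \ X → x = v := by
        intro x hx hx'
        rw [Finset.mem_insert] at hx
        rw [Finset.mem_sdiff] at hx'
        tauto
      have hsep : ∀ a ∈ insert v X, a ≠ v → ∀ b ∈ A \ X, b ≠ v → ¬ G.Adj a b := by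
        intro a ha hav b hb hbv
        rw [Finset.mem_insert] at ha
        rw [Finset.mem_sdiff] at hb
        exact hX a (by tauto) b (Finset.mem_erase.2 ⟨hbv, hb.1⟩) hb.2
      have hu' : (A \ X) ∪ insert v X = A := by rw [Finset.union_comm]; exact hu
      have hi' : ∀ x ∈ A \ X, x ∈ insert v X → x = v := fun x h h' => hi x h' h
      have hsep' : ∀ a ∈ A \ X, a ≠ v → ∀ b ∈ insert v X, b ≠ v → ¬ G.Adj a b :=
        fun a ha hav b hb hbv hab => hsep b hb hbv a ha hav hab.symm
      have hc1 : (insert v X).card < n := by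
        rw [← hcard]
        apply Finset.card_lt_card
        rw [Finset.ssubset_iff_of_subset (hu ▸ Finset.subset_union_left)]
        refine ⟨z, hz.2, ?_⟩
        rw [Finset.mem_insert]
        tauto
      have hc2 : (A \ X).card < n := by
        rw [← hcard]
        apply Finset.card_lt_card
        rw [Finset.ssubset_iff_of_subset Finset.sdiff_subset]
        obtain ⟨x, hx⟩ := hXne
        exact ⟨x, hXA' hx, by simp [hx]⟩
      have hd1 : 2 ≤ (insert v X).card := by
        rw [Finset.card_insert_of_notMem hvX]
        have := hXne.card_pos
        omega
      have hd2 : 2 ≤ (A \ X).card := by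
        have : 1 < (A \ X).card := by
          rw [Finset.one_lt_card]
          exact ⟨v, hv2, z, Finset.mem_sdiff.2 ⟨hz.2, hzX⟩, hz.1.symm⟩
        exact this
      obtain ⟨v1, w1, hw1, hl1⟩ := ih _ hc1 _ rfl hd1 (cutConn_part hA hu hv1 hv2 hi hsep)
      obtain ⟨v2, w2, hw2, hl2⟩ := ih _ hc2 _ rfl hd2 (cutConn_part hA hu' hv2 hv1 hi' hsep')
      have hm1 : v ∈ w1.support := (hw1 v).2 hv1
      have hm2 : v ∈ w2.support := (hw2 v).2 hv2
      refine ⟨v, (w1.rotate v hm1).append (w2.rotate v hm2), ?_, ?_⟩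
      · intro u
        rw [Walk.mem_support_append_iff, Walk.mem_support_rotate_iff, Walk.mem_support_rotate_iff,
          hw1, hw2, ← Finset.mem_union, hu]
      · intro y hnn hsymm h0 hF
        have e1 := hl1 y hnn hsymm h0 (feas_part hF hsymm h0 hu hv1 hv2 hi hsep)
        have e2 := hl2 y hnn hsymm h0 (feas_part hF hsymm h0 hu' hv2 hv1 hi' hsep')
        have e3 := val_part hnn h0 hu hi
        rw [Walk.length_append, Walk.length_rotate, Walk.length_rotate]
        push_cast
        linarith

end Blocks


/-! ### Part 10: conclusion -/
section Final
open Classical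
variable {V : Type*} {G : SimpleGraph V}

theorem cutConn_univ [Fintype V] (h : G.Preconnected) : CutConn G Finset.univ := by
  intro X _ hX hX'
  obtain ⟨a, ha⟩ := hX
  obtain ⟨b, hb⟩ : ∃ b, b ∉ X := by
    by_contra hcon
    push Not at hcon
    exact hX' (Finset.eq_univ_iff_forall.2 hcon)
  obtain ⟨p⟩ := h a b
  obtain ⟨d, -, h1, h2⟩ := p.exists_boundary_dart (X : Set V) (by simpa using ha) (by simpa using hb)
  exact ⟨d.fst, by simpa using h1, d.snd, Finset.mem_univ _, by simpa using h2, d.adj⟩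

theorem preconnected_of_cutConn {A : Finset V} (h : CutConn G A) :
    (G.induce (A : Set V)).Preconnected := by
  intro a b
  by_contra hab
  obtain ⟨c, hc, d, hd, hdX, hcd⟩ := h
    (A.filter fun x => ∃ hx : x ∈ (A : Set V), (G.induce (A : Set V)).Reachable a ⟨x, hx⟩)
    (Finset.filter_subset _ _)
    ⟨a, Finset.mem_filter.2 ⟨a.2, a.2, Reachable.refl _⟩⟩
    (by
      intro h
      have hb := (Finset.ext_iff.1 h (b : V)).2 b.2
      rw [Finset.mem_filter] at hb
      exact hab hb.2.2)
  rw [Finset.mem_filter] at hc hdX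
  obtain ⟨hcA, hcA', hac⟩ := hc
  apply hdX
  refine ⟨hd, hd, hac.trans ?_⟩
  apply Adj.reachable
  exact hcd

theorem nice_of_blocks [Fintype V]
    (hblockprop : ∀ B : Set V, IsBlock G B →
      (∀ v ∈ B, {u | u ∈ B ∧ G.Adj v u}.ncard ≤ 3) ∨
      IsEmpty (completeBipartiteGraph (Fin 1) (Fin 3) ↪g (G.induce B)))
    (A : Finset V) (hA2 : 2 ≤ A.card) (hA : CutConn G A)
    (hcut : ∀ v ∈ A, CutConn G (A.erase v)) : Nice G A := by
  have hP : (G.induce (A : Set V)).Connected ∧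
      ∀ v ∈ (A : Set V), (G.induce ((A : Set V) \ {v})).Preconnected := by
    constructor
    · have hne : A.Nonempty := by
        rw [← Finset.card_pos]
        omega
      obtain ⟨a, ha⟩ := hne
      have : Nonempty (A : Set V) := ⟨⟨a, ha⟩⟩
      exact ⟨preconnected_of_cutConn hA⟩
    · intro v hv
      rw [← Finset.coe_erase]
      exact preconnected_of_cutConn (hcut v hv)
  obtain ⟨B, hAB, hB⟩ := Finite.exists_le_maximal (α := Set V)
    (p := fun B => (G.induce B).Connected ∧ ∀ v ∈ B, (G.induce (B \ {v})).Preconnected) hP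
  have hblock : IsBlock G B :=
    ⟨hB.prop.1, hB.prop.2, fun B' hBB' h1 h2 => (hB.eq_of_subset ⟨h1, h2⟩ hBB').symm⟩
  rcases hblockprop B hblock with h | h
  · left
    intro v hv
    refine le_trans (Set.ncard_le_ncard ?_ (Set.toFinite _)) (h v (hAB hv))
    rintro u ⟨hu, huv⟩
    exact ⟨hAB hu, huv⟩
  · right
    intro u hu a ha b hb c hc hua hub huc hab hac hbc
    by_contra hcon
    push Not at hcon
    obtain ⟨n1, n2, n3⟩ := hcon
    apply h.false
    refine ⟨⟨Sum.elim (fun _ => ⟨u, hAB hu⟩) ![⟨a, hAB ha⟩, ⟨b, hAB hb⟩, ⟨c, hAB hc⟩], ?_⟩, ?_⟩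
    · have := hua.ne
      have := hub.ne
      have := huc.ne
      have := hua.ne'
      have := hub.ne'
      have := huc.ne'
      rintro (i | i) (j | j) hij <;> fin_cases i <;> fin_cases j <;> simp_all
    · have := hua.symm
      have := hub.symm
      have := huc.symm
      have n1' := fun h => n1 (G.adj_symm h)
      have n2' := fun h => n2 (G.adj_symm h)
      have n3' := fun h => n3 (G.adj_symm h)
      rintro (i | i) (j | j) <;> fin_cases i <;> fin_cases j <;> simp_all <;> assumption

theorem hkCut_eq [Fintype V] (x : Sym2 V → ℝ) (X : Finset V) :
    hkCut G x (X : Set V) =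
      ∑ a ∈ X, ∑ b ∈ Finset.univ \ X, if G.Adj a b then x s(a, b) else 0 := by
  rw [← Finset.sum_product' (f := fun a b => if G.Adj a b then x s(a, b) else 0),
    ← Finset.sum_filter]
  unfold hkCut
  have hset : {e ∈ G.edgeSet | ∃ a b, e = s(a, b) ∧ a ∈ (X : Set V) ∧ b ∉ (X : Set V)} =
      (((X ×ˢ (Finset.univ \ X)).filter fun p => G.Adj p.1 p.2).image
        fun p => s(p.1, p.2) : Finset (Sym2 V)) := by
    ext e
    simp only [Set.mem_ofPred_eq, Finset.coe_image, Set.mem_image, Finset.mem_coe,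
      Finset.mem_filter, Finset.mem_product, Finset.mem_sdiff, Finset.mem_univ, true_and]
    constructor
    · rintro ⟨he, a, b, rfl, ha, hb⟩
      exact ⟨(a, b), ⟨⟨ha, hb⟩, he⟩, rfl⟩
    · rintro ⟨⟨a, b⟩, ⟨⟨ha, hb⟩, he⟩, rfl⟩
      exact ⟨he, a, b, rfl, ha, hb⟩
  rw [hset, finsum_mem_coe_finset, Finset.sum_image]
  rintro ⟨a, b⟩ hp ⟨c, d⟩ hq h
  simp only [Finset.coe_filter, Set.mem_ofPred_eq, Finset.mem_product, Finset.mem_sdiff,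
    Finset.mem_univ, true_and] at hp hq
  rw [Sym2.eq_iff] at h
  rcases h with ⟨rfl, rfl⟩ | ⟨rfl, rfl⟩
  · rfl
  · exact absurd hp.1.1 hq.1.2

theorem hkValue_eq [Fintype V] (x : Sym2 V → ℝ) :
    2 * hkValue G x =
      ∑ a, ∑ b, if G.Adj a b then x s(a, b) else 0 := by
  rw [← Finset.sum_product' (f := fun a b => if G.Adj a b then x s(a, b) else 0),
    ← Finset.sum_filter]
  unfold hkValue
  rw [← coe_edgeFinset, finsum_mem_coe_finset, Finset.mul_sum,
    ← Finset.sum_fiberwise_of_maps_to (t := G.edgeFinset) (g := fun p : V × V => s(p.1, p.2))]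
  · apply Finset.sum_congr rfl
    intro e he
    induction e using Sym2.ind with
    | _ a b =>
      rw [mem_edgeFinset, mem_edgeSet] at he
      have hf : ((Finset.univ ×ˢ Finset.univ : Finset (V × V)).filter
          (fun p => G.Adj p.1 p.2)).filter (fun p => s(p.1, p.2) = s(a, b)) =
          {(a, b), (b, a)} := by
        ext ⟨c, d⟩
        simp only [Finset.mem_filter, Finset.mem_product, Finset.mem_univ, true_and,
          Finset.mem_insert, Finset.mem_singleton, Prod.mk.injEq, Sym2.eq_iff]
        constructor
        · rintro ⟨-, h⟩
          exact h
        · rintro (⟨rfl, rfl⟩ | ⟨rfl, rfl⟩)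
          · exact ⟨he, Or.inl ⟨rfl, rfl⟩⟩
          · exact ⟨he.symm, Or.inr ⟨rfl, rfl⟩⟩
      rw [hf, Finset.sum_pair]
      · rw [Sym2.eq_swap (a := b) (b := a)]
        ring
      · intro h
        exact he.ne (Prod.mk.inj h).1
  · rintro ⟨a, b⟩ hp
    simpa using hp

theorem two_feasible [Fintype V] (h : CutConn G Finset.univ) : HKFeasible G fun _ => 2 := by
  refine ⟨fun _ => by norm_num, ?_⟩
  intro S hS hS'
  obtain ⟨X, rfl⟩ : ∃ X : Finset V, S = (X : Set V) := ⟨S.toFinset, by simp⟩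
  rw [hkCut_eq]
  obtain ⟨a, ha, b, -, hb, hab⟩ := h X (Finset.subset_univ _) (by simpa using hS)
    (by simpa using hS')
  have hnn : ∀ a b, (0 : ℝ) ≤ if G.Adj a b then (2 : ℝ) else 0 := by
    intro a b
    split_ifs <;> norm_num
  refine le_trans ?_ (Finset.single_le_sum (f := fun a => ∑ b ∈ Finset.univ \ X,
    if G.Adj a b then (2 : ℝ) else 0) (fun a _ => Finset.sum_nonneg fun b _ => hnn a b) ha)
  refine le_trans ?_ (Finset.single_le_sum (f := fun b => if G.Adj a b then (2 : ℝ) else 0)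
    (fun b _ => hnn a b) (a := b) (by simpa using hb))
  simp [hab]

end Final

/-- Every connected simple graph on `n ≥ 2` vertices, each of whose
blocks has maximum degree at most 3 or is claw-free, has a spanning closed walk
of length at most `(4/3)·OLP(G)`; in particular the integrality gap of the
Held-Karp relaxation on this class of graphs is at most `4/3`. -/
theorem spanning_closed_walk_le_heldKarp_blockwise
    {V : Type*} [Fintype V]
    (G : SimpleGraph V)
    (hn : 2 ≤ Fintype.card V)
    (hconn : G.Connected)
    (hblockprop : ∀ B : Set V, IsBlock G B →
      (∀ v ∈ B, {u | u ∈ B ∧ G.Adj v u}.ncard ≤ 3) ∨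
      IsEmpty (completeBipartiteGraph (Fin 1) (Fin 3) ↪g (G.induce B))) :
    ∃ (v : V) (w : G.Walk v v), (∀ u : V, u ∈ w.support) ∧
      (w.length : ℝ) ≤ 4 / 3 * OLP G := by
  classical
  have hcc : CutConn G Finset.univ := cutConn_univ hconn.preconnected
  obtain ⟨v, w, hw, hlen⟩ := block_induction (G := G)
    (fun A hA2 hA hcut => nice_of_blocks hblockprop A hA2 hA hcut) _ Finset.univ rfl
    (by simpa using hn) hcc
  refine ⟨v, w, fun u => (hw u).2 (Finset.mem_univ _), ?_⟩
  have hlow : 3 / 4 * (w.length : ℝ) ≤ OLP G := by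
    apply le_csInf
    · exact ⟨_, fun _ => 2, two_feasible hcc, rfl⟩
    · rintro _ ⟨x, hx, rfl⟩
      have h := hlen (fun a b => if G.Adj a b then x s(a, b) else 0)
        (fun a b => by
          split_ifs
          · exact hx.1 _
          · exact le_rfl)
        (fun a b => by simp only [G.adj_comm a b, Sym2.eq_swap (a := a) (b := b)])
        (fun a b hab => by simp only [hab, if_false])
        (by
          intro X _ hX hX'
          refine (hx.2 (X : Set V) (by simpa using hX) (by simpa using hX')).trans ?_
          rw [hkCut_eq])
      rw [← hkValue_eq] at h
      linarith
  linarith
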